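/- arXiv:2111.04166 — 3 statements merged into one kernel-verified Lean document; each statement's English description precedes it below -/
import Mathlib

section
/- Let F_q have odd characteristic and let R(x) = g(x)/h(x) be a cubic rational expression over F_q (g, h coprime, max(deg g, deg h) = 3) having four distinct ramification points over the algebraic closure of F_q; equivalently, the polynomial g'(x)h(x) − g(x)h'(x) has no repeated roots and has degree 4, or has no repeated roots and degree 3 (in which case ∞ is the fourth ramification point). Then there exists a constant C, depending only on g, h and q, such that for every integer n > 1, | |𝓘(g, h, n, q)| − q^n/(3n) | ≤ C · q^{n/2}/n. -/
open Polynomial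

/-- The transform `f_R` of a nonzero polynomial `f` by the rational expression `R = g/h`. -/
noncomputable def ratTransform {K : Type*} [Field K] (g h f : K[X]) : K[X] :=
  ∑ i ∈ Finset.range (f.natDegree + 1), C (f.coeff i) * g ^ i * h ^ (f.natDegree - i)

/-- `𝓘(g,h,n,q)`: the set of monic irreducible polynomials `f` of degree `n` over the field
such that `f_R` is irreducible. -/
noncomputable def IrredSet {K : Type*} [Field K] (g h : K[X]) (n : ℕ) : Set K[X] :=
  {f | f.Monic ∧ Irreducible f ∧ f.natDegree = n ∧ Irreducible (ratTransform g h f)}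

/-!
Sending an element of `𝔽_{qⁿ}` to its minimal polynomial is `n`-to-one from the generators of
`𝔽_{qⁿ}` over `𝔽_q` onto the monic irreducible polynomials of degree `n`, and non-generators number
`O(q^{n/2})`. If `f` is the minimal polynomial of `α`, then `f_R` is irreducible if and only if
`g - α h` is irreducible over `𝔽_{qⁿ}` (Capelli); as this is a cubic, that means `α` is not a value
of `R` on `𝔽_{qⁿ}`. So everything rests on the number of values taken by `R`, which is the sum of
`1 / |R⁻¹(R(x))|` over `x ∈ 𝔽_{qⁿ}`. The points `y ≠ x` with `R(y) = R(x)` are the roots of the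
quadratic `(g(x) h(y) - g(y) h(x)) / (x - y)` in `y`, so apart from `O(1)` many `x` this fiber has
`2 + χ(D(x)) ∈ {1, 3}` elements, where `D` is the discriminant of the quadratic and `χ` the
quadratic character of `𝔽_{qⁿ}`; as `3 / (2 + χ) = 2 - χ` for `χ = ±1`, three times the number of
omitted values is `qⁿ + ∑ₓ χ(D(x)) + O(1)`. A simple root of the Wronskian of `g` and `h` prevents
`D` from being a constant times a square, and the method of Stepanov then bounds the character sum
by `O(q^{n/2})`.
-/

section Bivariate

theorem coeff_eval_X_pow {R : Type*} [CommSemiring R] {M : ℕ} {H : R[X][X]}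
    (hH : ∀ i, (H.coeff i).natDegree < M) (i : ℕ) {j : ℕ} (hj : j < M) :
    (H.eval (X ^ M)).coeff (i * M + j) = (H.coeff i).coeff j := by
  have hterm : ∀ l, (H.coeff l * (X ^ M) ^ l).coeff (i * M + j) =
      if l = i then (H.coeff i).coeff j else 0 := by
    intro l
    rw [← pow_mul, coeff_mul_X_pow']
    rcases lt_trichotomy l i with h | rfl | h
    · have : M * l + M ≤ i * M := by nlinarith
      rw [if_neg h.ne, if_pos (by lia), coeff_eq_zero_of_natDegree_lt]
      exact (hH l).trans_le (by lia)
    · rw [if_pos rfl, if_pos (by lia), mul_comm M, Nat.add_sub_cancel_left]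
    · have : i * M + M ≤ M * l := by nlinarith
      rw [if_neg h.ne', if_neg (by lia)]
  rw [eval_eq_sum_range, finsetSum_coeff, Finset.sum_congr rfl fun l _ => hterm l,
    Finset.sum_ite_eq']
  split_ifs with hi
  · rfl
  · rw [coeff_eq_zero_of_natDegree_lt (p := H) (by simpa using hi), coeff_zero]

theorem eq_zero_of_eval_X_pow_eq_zero {R : Type*} [CommSemiring R] {M : ℕ} {H : R[X][X]}
    (hH : ∀ i, (H.coeff i).natDegree < M) (h0 : H.eval (X ^ M) = 0) : H = 0 := by
  ext i j
  rcases lt_or_ge j M with hj | hj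
  · rw [← coeff_eval_X_pow hH i hj, h0, coeff_zero, coeff_zero, coeff_zero]
  · rw [coeff_eq_zero_of_natDegree_lt ((hH i).trans_le hj), coeff_zero, coeff_zero]

theorem natDegree_coeff_mul_le {R : Type*} [Semiring R] {A B : R[X][X]} {a b : ℕ}
    (hA : ∀ i, (A.coeff i).natDegree ≤ a) (hB : ∀ i, (B.coeff i).natDegree ≤ b) (i : ℕ) :
    ((A * B).coeff i).natDegree ≤ a + b := by
  rw [coeff_mul]
  exact natDegree_sum_le_of_forall_le _ _ fun x _ =>
    natDegree_mul_le.trans (add_le_add (hA x.1) (hB x.2))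

theorem natDegree_eval_X_pow_le {R : Type*} [CommSemiring R] {H : R[X][X]} {k : ℕ}
    (hH : ∀ i, (H.coeff i).natDegree ≤ k) (M : ℕ) :
    (H.eval (X ^ M)).natDegree ≤ k + H.natDegree * M := by
  rw [eval_eq_sum_range]
  refine natDegree_sum_le_of_forall_le _ _ fun i hi => ?_
  rw [← pow_mul, mul_comm M]
  refine (natDegree_mul_le.trans (add_le_add (hH i) (natDegree_X_pow_le _))).trans ?_
  gcongr
  exact Finset.mem_range_succ_iff.mp hi

theorem natDegree_eval_X_pow_add_eval_X_pow_mul_le {R : Type*} [CommSemiring R] {H₀ H₁ : R[X][X]}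
    {k m : ℕ} (hH₀ : ∀ i, (H₀.coeff i).natDegree ≤ k) (hH₁ : ∀ i, (H₁.coeff i).natDegree ≤ k)
    (hm₀ : H₀.natDegree ≤ m) (hm₁ : H₁.natDegree ≤ m) (b : R[X]) (M : ℕ) :
    (H₀.eval (X ^ M) + H₁.eval (X ^ M) * b).natDegree ≤ k + m * M + b.natDegree := by
  have hle {H : R[X][X]} (hH : ∀ i, (H.coeff i).natDegree ≤ k) (hm : H.natDegree ≤ m) :
      (H.eval (X ^ M)).natDegree ≤ k + m * M :=
    (natDegree_eval_X_pow_le hH M).trans (Nat.add_le_add_left (Nat.mul_le_mul_right M hm) k)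
  exact natDegree_add_le_of_degree_le ((hle hH₀ hm₀).trans (Nat.le_add_right _ _))
    (natDegree_mul_le.trans (Nat.add_le_add_right (hle hH₁ hm₁) _))

/-- The bivariate polynomial `∑ i < m, v i * Y ^ i`, as a linear function of its coefficients
`v i`, which are polynomials in `X` of degree less than `k`. -/
noncomputable def bivariateOfFn (F : Type*) [Field F] (k m : ℕ) :
    (Fin m → degreeLT F k) →ₗ[F] F[X][X] :=
  letI := Classical.decEq F[X]
  (ofFn m).restrictScalars F ∘ₗ (degreeLT F k).subtype.compLeft (Fin m)

variable {F : Type*} [Field F]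

theorem bivariateOfFn_injective (k m : ℕ) : Function.Injective (bivariateOfFn F k m) := by
  let _ := Classical.decEq F[X]
  intro v w hvw
  have hcoe : (fun i => (v i : F[X])) = fun i => (w i : F[X]) := injective_ofFn m hvw
  exact funext fun i => Subtype.ext (congrFun hcoe i)

theorem natDegree_coeff_bivariateOfFn_le {k m : ℕ} (v : Fin m → degreeLT F (k + 1)) (i : ℕ) :
    ((bivariateOfFn F (k + 1) m v).coeff i).natDegree ≤ k := by
  let _ := Classical.decEq F[X]
  change ((ofFn m fun j => (v j : F[X])).coeff i).natDegree ≤ k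
  rcases lt_or_ge i m with hi | hi
  · rw [ofFn_coeff_eq_val_of_lt _ hi, natDegree_le_iff_degree_le, ← mem_degreeLE,
      ← degreeLT_succ_eq_degreeLE]
    exact (v ⟨i, hi⟩).2
  · rw [ofFn_coeff_eq_zero_of_ge _ hi, natDegree_zero]
    exact Nat.zero_le k

theorem natDegree_bivariateOfFn_lt {k m : ℕ} (hm : 0 < m) (v : Fin m → degreeLT F k) :
    (bivariateOfFn F k m v).natDegree < m := by
  let _ := Classical.decEq F[X]
  exact ofFn_natDegree_lt hm _

theorem exists_ne_zero_map_eq_zero_of_finrank_lt {V : Type*} [AddCommGroup V] [Module F V]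
    (Φ : V →ₗ[F] F[X]) {N : ℕ} (hN : N < Module.finrank F V) (hΦ : ∀ v, (Φ v).degree < N) :
    ∃ v ≠ 0, Φ v = 0 := by
  have := Module.finite_of_finrank_pos (N.zero_le.trans_lt hN)
  let Ψ := Φ.codRestrict (degreeLT F N) fun v => mem_degreeLT.mpr (hΦ v)
  have hker : LinearMap.ker Ψ ≠ ⊥ := by
    have := Module.Finite.equiv (degreeLTEquiv F N).symm
    apply LinearMap.ker_ne_bot_of_finrank_lt
    simpa only [(degreeLTEquiv F N).finrank_eq, Module.finrank_fin_fun] using hN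
  obtain ⟨v, hv, hv0⟩ := Submodule.exists_mem_ne_zero_of_ne_bot hker
  exact ⟨v, hv0, congrArg Subtype.val (LinearMap.mem_ker.mp hv)⟩

theorem natDegree_eval₂_expand_le {H : F[X][X]} {k : ℕ} (hH : ∀ i, (H.coeff i).natDegree ≤ k)
    (P : ℕ) : (H.eval₂ (expand F P : F[X] →+* F[X]) X).natDegree ≤ k * P + H.natDegree := by
  rw [eval₂_eq_sum_range]
  refine natDegree_sum_le_of_forall_le _ _ fun i hi => natDegree_mul_le.trans ?_
  refine add_le_add ?_ ((natDegree_X_pow_le i).trans (Finset.mem_range_succ_iff.mp hi))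
  rw [RingHom.coe_coe, natDegree_expand]
  exact Nat.mul_le_mul_right P (hH i)

-- Evaluating `H(X, Y)` by `eval₂ (expand F P) X` gives `H(X ^ P, X)`; over a field with `P * M`
-- elements this takes the same values as the `P`-th power of `H(X, X ^ M)` when `P` is a power of
-- `|F|`.
theorem exists_eval₂_expand_add_mul_eq_zero {b : F[X]} {P k m : ℕ} (hm : 0 < m)
    (hdim : k * P + m + b.natDegree < 2 * ((k + 1) * m)) :
    ∃ H₀ H₁ : F[X][X], ¬(H₀ = 0 ∧ H₁ = 0) ∧
      (∀ i, (H₀.coeff i).natDegree ≤ k) ∧ (∀ i, (H₁.coeff i).natDegree ≤ k) ∧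
      H₀.natDegree < m ∧ H₁.natDegree < m ∧
      H₀.eval₂ (expand F P : F[X] →+* F[X]) X +
        H₁.eval₂ (expand F P : F[X] →+* F[X]) X * b = 0 := by
  let E : F[X][X] →ₐ[F] F[X] := eval₂AlgHom (expand F P) X fun _ => Commute.all _ _
  let ι := bivariateOfFn F (k + 1) m
  let Ψ := E.toLinearMap ∘ₗ ι
  let Φ := Ψ.coprod (LinearMap.mulRight F b ∘ₗ Ψ)
  have hΨ : ∀ v, (Ψ v).natDegree + 1 ≤ k * P + m := fun v =>
    (Nat.succ_le_succ (natDegree_eval₂_expand_le (natDegree_coeff_bivariateOfFn_le v) P)).trans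
      (Nat.add_lt_add_left (natDegree_bivariateOfFn_lt hm v) _)
  have hΦ : ∀ v, (Φ v).degree < ((k * P + m + b.natDegree : ℕ) : WithBot ℕ) := by
    intro v
    refine degree_le_natDegree.trans_lt (Nat.cast_lt.mpr ?_)
    have h₁ : (Ψ v.2 * b).natDegree ≤ _ := natDegree_mul_le
    have := natDegree_add_le (Ψ v.1) (Ψ v.2 * b)
    have := hΨ v.1
    have := hΨ v.2
    change (Ψ v.1 + Ψ v.2 * b).natDegree < _
    lia
  have hV : Module.finrank F ((Fin m → degreeLT F (k + 1)) × (Fin m → degreeLT F (k + 1))) =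
      2 * ((k + 1) * m) := by
    have := Module.Finite.equiv (degreeLTEquiv F (k + 1)).symm
    rw [Module.finrank_prod, Module.finrank_pi_fintype, (degreeLTEquiv F (k + 1)).finrank_eq]
    simp only [Module.finrank_fin_fun, Finset.sum_const, Finset.card_univ, Fintype.card_fin,
      smul_eq_mul]
    ring
  obtain ⟨v, hv0, hv⟩ := exists_ne_zero_map_eq_zero_of_finrank_lt Φ (N := k * P + m + b.natDegree)
    (hdim.trans_eq hV.symm) hΦ
  refine ⟨ι v.1, ι v.2, fun h => hv0 (Prod.ext ?_ ?_), natDegree_coeff_bivariateOfFn_le _,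
    natDegree_coeff_bivariateOfFn_le _, natDegree_bivariateOfFn_lt hm _,
    natDegree_bivariateOfFn_lt hm _, hv⟩
  · exact bivariateOfFn_injective _ _ (h.1.trans (map_zero ι).symm)
  · exact bivariateOfFn_injective _ _ (h.2.trans (map_zero ι).symm)

theorem eq_zero_of_sq_eq_mul_map_C_mul_sq {f : F[X]} (hf : ∀ (c : F) (r : F[X]), f ≠ C c * r ^ 2)
    {H₀ H₁ : F[X][X]} (h : H₀ ^ 2 = C f * f.map C * H₁ ^ 2) : H₁ = 0 := by
  by_contra hne
  have hlead : H₀.leadingCoeff ^ 2 = C f.leadingCoeff * f * H₁.leadingCoeff ^ 2 := by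
    have := congrArg leadingCoeff h
    rw [leadingCoeff_pow, leadingCoeff_mul, leadingCoeff_mul, leadingCoeff_pow, leadingCoeff_C,
      leadingCoeff_map_of_injective C_injective] at this
    rw [this, mul_comm f]
  obtain ⟨r, hr⟩ : H₁.leadingCoeff ∣ H₀.leadingCoeff :=
    (IsIntegrallyClosed.pow_dvd_pow_iff two_ne_zero).mp ⟨_, hlead.trans (mul_comm _ _)⟩
  have hfr : C f.leadingCoeff * f = r ^ 2 :=
    mul_right_cancel₀ (pow_ne_zero 2 (leadingCoeff_ne_zero.mpr hne)) (by rw [← hlead, hr]; ring)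
  have hf0 : f.leadingCoeff ≠ 0 := fun h0 =>
    hf 0 0 (by rw [leadingCoeff_eq_zero.mp h0, C_0, zero_mul])
  refine hf f.leadingCoeff⁻¹ r ?_
  rw [← hfr, ← mul_assoc, ← C_mul, inv_mul_cancel₀ hf0, C_1, one_mul]

end Bivariate

section Stepanov

theorem card_le_natDegree_of_aeval_eq_zero {F K : Type*} [Field F] [Field K] [Algebra F K]
    {w : F[X]} (hw : w ≠ 0) {S : Finset K}
    (hS : ∀ x ∈ S, aeval x w = 0) : S.card ≤ w.natDegree := by
  rw [← natDegree_map (algebraMap F K)]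
  refine card_le_degree_of_subset_roots fun x hx => ?_
  rw [mem_roots ((Polynomial.map_ne_zero_iff (algebraMap F K).injective).mpr hw), IsRoot,
    eval_map_algebraMap, hS x hx]

theorem aeval_pow_half_pow_eq {F K : Type*} [Field F] [Field K] [Fintype K] [Algebra F K]
    {f : F[X]} {a : F} {x : K} {M P : ℕ} (hM : Odd M) (hP : Odd P)
    (hK : Fintype.card K = P * M)
    (hx : aeval x f ^ (Fintype.card K / 2) = algebraMap F K a) :
    (aeval x f ^ ((M + 1) / 2)) ^ P = algebraMap F K a * aeval x f ^ ((P + 1) / 2) := by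
  obtain ⟨u, rfl⟩ := hP
  obtain ⟨v, rfl⟩ := hM
  have hhalf : (2 * u + 1) * (2 * v + 1) = 2 * (2 * (u * v) + u + v) + 1 := by ring
  rw [← hx, ← pow_mul, ← pow_add, hK, hhalf, show (2 * v + 1 + 1) / 2 = v + 1 by lia,
    show (2 * u + 1 + 1) / 2 = u + 1 by lia,
    show (2 * (2 * (u * v) + u + v) + 1) / 2 = 2 * (u * v) + u + v by lia]
  ring

variable {F : Type*} [Field F] [Fintype F]

theorem expand_card_pow (t : ℕ) (f : F[X]) :
    expand F (Fintype.card F ^ t) f = f ^ Fintype.card F ^ t := by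
  induction t with
  | zero => simp only [pow_zero, expand_one, pow_one]
  | succ t ih =>
    rw [pow_succ', ← expand_expand, ih, map_pow, FiniteField.expand_card, ← pow_mul]

theorem eval_map_C_X_pow_card_pow (t : ℕ) (f : F[X]) :
    (f.map C).eval (X ^ Fintype.card F ^ t) = f ^ Fintype.card F ^ t := by
  rw [← expand_card_pow t f, expand_eq_comp_X_pow, eval_map]
  rfl

-- With `M = |F| ^ t` we have `f(X ^ M) = f(X) ^ M`, so `f ^ ((M + 1) / 2)` is a square root of
-- `f(X) f(Y)` at `Y = X ^ M`; squaring the relation leaves one in `X` and `Y = X ^ M` alone, which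
-- holds identically in `Y` because its degree in `X` is less than `M`.
theorem eq_zero_of_eval_add_eval_mul_pow_eq_zero {f : F[X]}
    (hf : ∀ (c : F) (r : F[X]), f ≠ C c * r ^ 2) {t k : ℕ} (hodd : Odd (Fintype.card F ^ t))
    (hk : 2 * k + f.natDegree < Fintype.card F ^ t) {H₀ H₁ : F[X][X]}
    (hH₀ : ∀ i, (H₀.coeff i).natDegree ≤ k) (hH₁ : ∀ i, (H₁.coeff i).natDegree ≤ k)
    (h : H₀.eval (X ^ Fintype.card F ^ t) +
      H₁.eval (X ^ Fintype.card F ^ t) * f ^ ((Fintype.card F ^ t + 1) / 2) = 0) :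
    H₀ = 0 ∧ H₁ = 0 := by
  set M := Fintype.card F ^ t
  have hsq (H : F[X][X]) (hH : ∀ i, (H.coeff i).natDegree ≤ k) (i : ℕ) :
      ((H ^ 2).coeff i).natDegree ≤ 2 * k := by
    rw [pow_two, two_mul]
    exact natDegree_coeff_mul_le hH hH i
  have hpow : f * f ^ M = (f ^ ((M + 1) / 2)) ^ 2 := by
    obtain ⟨j, hj⟩ := hodd
    rw [← pow_succ', ← pow_mul, show (M + 1) / 2 * 2 = M + 1 by lia]
  have hnorm : H₀ ^ 2 - C f * f.map C * H₁ ^ 2 = 0 := by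
    refine eq_zero_of_eval_X_pow_eq_zero (M := M) (fun i => ?_) ?_
    · have hC : ∀ i, ((f.map C).coeff i).natDegree ≤ 0 := fun i => by
        rw [coeff_map, natDegree_C]
      have h₁ := natDegree_coeff_mul_le hC (hsq H₁ hH₁) i
      have h₂ : (f * (f.map C * H₁ ^ 2).coeff i).natDegree ≤ _ := natDegree_mul_le
      have h₀ := hsq H₀ hH₀ i
      rw [coeff_sub, mul_assoc, coeff_C_mul]
      exact (natDegree_sub_le _ _).trans_lt (max_lt (by lia) (by lia))
    · simp only [eval_sub, eval_mul, eval_pow, eval_C, M, eval_map_C_X_pow_card_pow]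
      rw [eq_neg_of_add_eq_zero_left h, hpow]
      ring
  have hH₁0 : H₁ = 0 := eq_zero_of_sq_eq_mul_map_C_mul_sq hf (sub_eq_zero.mp hnorm)
  refine ⟨?_, hH₁0⟩
  simpa only [hH₁0, ne_eq, OfNat.ofNat_ne_zero, not_false_eq_true, zero_pow, mul_zero, sub_zero,
    pow_eq_zero_iff] using hnorm

variable {K : Type*} [Field K] [Fintype K] [Algebra F K]

theorem aeval_expand_eval_X_pow {s t : ℕ} (hK : Fintype.card K = Fintype.card F ^ (s + t))
    (H : F[X][X]) (x : K) :
    aeval x (expand F (Fintype.card F ^ s) (H.eval (X ^ Fintype.card F ^ t))) =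
      aeval x (H.eval₂ (expand F (Fintype.card F ^ s) : F[X] →+* F[X]) X) := by
  have hx : (x ^ Fintype.card F ^ s) ^ Fintype.card F ^ t = x := by
    rw [← pow_mul, ← pow_add, ← hK, FiniteField.pow_card]
  change ((aeval x : F[X] →ₐ[F] K) : F[X] →+* K)
      ((expand F (Fintype.card F ^ s) : F[X] →+* F[X]) (H.eval _)) =
    ((aeval x : F[X] →ₐ[F] K) : F[X] →+* K) (H.eval₂ _ X)
  rw [eval, hom_eval₂, hom_eval₂, hom_eval₂]
  congr 1
  simp only [RingHom.coe_coe, map_pow, expand_X, aeval_X, hx]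

theorem aeval_eval_add_eval_mul_pow_eq_zero (hodd : Odd (Fintype.card F)) {s t : ℕ}
    (hK : Fintype.card K = Fintype.card F ^ (s + t)) {f : F[X]} {a : F} {H₀ H₁ : F[X][X]}
    (hvan : H₀.eval₂ (expand F (Fintype.card F ^ s) : F[X] →+* F[X]) X +
      H₁.eval₂ (expand F (Fintype.card F ^ s) : F[X] →+* F[X]) X *
        (C a * f ^ ((Fintype.card F ^ s + 1) / 2)) = 0)
    {x : K} (hx : aeval x f ^ (Fintype.card K / 2) = algebraMap F K a) :
    aeval x (H₀.eval (X ^ Fintype.card F ^ t) +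
      H₁.eval (X ^ Fintype.card F ^ t) * f ^ ((Fintype.card F ^ t + 1) / 2)) = 0 := by
  refine eq_zero_of_pow_eq_zero (n := Fintype.card F ^ s) ?_
  rw [← map_pow, ← expand_card_pow, map_add, map_mul, map_add, map_mul,
    aeval_expand_eval_X_pow hK, aeval_expand_eval_X_pow hK, expand_card_pow, map_pow, map_pow,
    aeval_pow_half_pow_eq hodd.pow hodd.pow (hK.trans (pow_add _ _ _)) hx,
    ← aeval_C (A := K) x, ← map_pow, ← map_mul, ← map_mul, ← map_add, hvan, map_zero]

theorem two_mul_card_le_of_aeval_pow_eq {f : F[X]} (hf : ∀ (c : F) (r : F[X]), f ≠ C c * r ^ 2)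
    (hodd : Odd (Fintype.card F)) {s t : ℕ}
    (hst : f.natDegree * (Fintype.card F ^ s + 2) < Fintype.card F ^ t)
    (hK : Fintype.card K = Fintype.card F ^ (s + t)) {a : F} {S : Finset K}
    (hS : ∀ x ∈ S, aeval x f ^ (Fintype.card K / 2) = algebraMap F K a) :
    2 * S.card ≤ Fintype.card K + f.natDegree * Fintype.card F ^ t := by
  set P := Fintype.card F ^ s
  set M := Fintype.card F ^ t
  set d := f.natDegree
  have hQ : Fintype.card K = P * M := hK.trans (pow_add _ _ _)
  obtain ⟨u, hu⟩ : Odd P := hodd.pow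
  obtain ⟨v, hv⟩ : Odd M := hodd.pow
  have hP2 : (P + 1) / 2 = u + 1 := by lia
  have hM2 : (M + 1) / 2 = v + 1 := by lia
  have hb : (C a * f ^ ((P + 1) / 2)).natDegree ≤ (u + 1) * d := by
    rw [← hP2]
    exact (natDegree_C_mul_le _ _).trans natDegree_pow_le
  obtain ⟨H₀, H₁, hne, hH₀, hH₁, hm₀, hm₁, hvan⟩ := exists_eval₂_expand_add_mul_eq_zero
    (b := C a * f ^ ((P + 1) / 2)) (P := P) (k := d * (u + 1)) (m := u + 1) u.succ_pos
    (by rw [hu] at hb ⊢; nlinarith)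
  set w := H₀.eval (X ^ M) + H₁.eval (X ^ M) * f ^ ((M + 1) / 2)
  have hkM : 2 * (d * (u + 1)) + d < M := by
    rw [hu] at hst
    linarith
  have hw0 : w ≠ 0 := fun h0 => hne
    (eq_zero_of_eval_add_eval_mul_pow_eq_zero hf hodd.pow hkM hH₀ hH₁ h0)
  have hwdeg : w.natDegree ≤ d * (u + 1) + u * M + (v + 1) * d := by
    refine (natDegree_eval_X_pow_add_eval_X_pow_mul_le hH₀ hH₁ (Nat.lt_succ_iff.mp hm₀)
      (Nat.lt_succ_iff.mp hm₁) _ M).trans (Nat.add_le_add_left ?_ _)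
    rw [← hM2]
    exact natDegree_pow_le
  have hcard := card_le_natDegree_of_aeval_eq_zero hw0 fun x hx =>
    aeval_eval_add_eval_mul_pow_eq_zero hodd hK hvan (hS x hx)
  have : P * M = 2 * (u * M) + M := by rw [hu]; ring
  rw [hQ]
  nlinarith

theorem card_quadraticChar_eq_le [DecidableEq K] {f : F[X]}
    (hf : ∀ (c : F) (r : F[X]), f ≠ C c * r ^ 2) (hodd : Odd (Fintype.card F)) {s t : ℕ}
    (hst : f.natDegree * (Fintype.card F ^ s + 2) < Fintype.card F ^ t)
    (hK : Fintype.card K = Fintype.card F ^ (s + t)) (ε : ℤ) :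
    2 * (Finset.univ.filter fun x : K => quadraticChar K (aeval x f) = ε).card ≤
      Fintype.card K + f.natDegree * Fintype.card F ^ t := by
  have hchar : ringChar K ≠ 2 := fun h2 => by
    have := FiniteField.even_card_of_char_two h2
    have := Nat.odd_iff.mp (hK ▸ hodd.pow)
    lia
  refine two_mul_card_le_of_aeval_pow_eq hf hodd hst hK (a := (ε : F)) fun x hx => ?_
  rw [← quadraticChar_eq_pow_of_char_ne_two' hchar, (Finset.mem_filter.mp hx).2, map_intCast]

theorem abs_sum_quadraticChar_le [DecidableEq K] {f : F[X]}
    (hf : ∀ (c : F) (r : F[X]), f ≠ C c * r ^ 2) (hodd : Odd (Fintype.card F)) {s t : ℕ}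
    (hst : f.natDegree * (Fintype.card F ^ s + 2) < Fintype.card F ^ t)
    (hK : Fintype.card K = Fintype.card F ^ (s + t)) :
    |∑ x : K, quadraticChar K (aeval x f)| ≤
      f.natDegree * ((Fintype.card F : ℤ) ^ t + 1) := by
  set χ := quadraticChar K
  set N : ℤ → ℕ := fun ε => (Finset.univ.filter fun x : K => χ (aeval x f) = ε).card with hN
  have htri (y : K) : χ y = 0 ∨ χ y = 1 ∨ χ y = -1 :=
    (eq_or_ne y 0).imp quadraticChar_eq_zero_iff.mpr quadraticChar_dichotomy
  have hN₀ : N 0 ≤ f.natDegree := by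
    refine card_le_natDegree_of_aeval_eq_zero (fun h0 => hf 0 0 (by rw [h0, C_0, zero_mul]))
      fun x hx => quadraticChar_eq_zero_iff.mp (Finset.mem_filter.mp hx).2
  have hN₁ : 2 * N 1 ≤ _ := card_quadraticChar_eq_le hf hodd hst hK 1
  have hN₂ : 2 * N (-1) ≤ _ := card_quadraticChar_eq_le hf hodd hst hK (-1)
  have hsum : ∑ x : K, χ (aeval x f) = (N 1 : ℤ) - N (-1) := by
    simp only [hN, Finset.card_filter, Nat.cast_sum, ← Finset.sum_sub_distrib]
    refine Finset.sum_congr rfl fun x _ => ?_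
    rcases htri (aeval x f) with h | h | h <;> rw [h] <;> norm_num
  have hcard : Fintype.card K = N 0 + N 1 + N (-1) := by
    simp only [hN, Finset.card_filter, ← Finset.sum_add_distrib]
    rw [← Finset.card_univ, Finset.card_eq_sum_ones]
    refine Finset.sum_congr rfl fun x _ => ?_
    rcases htri (aeval x f) with h | h | h <;> rw [h] <;> norm_num
  rw [hsum, abs_le, mul_add, mul_one]
  zify at hN₀ hN₁ hN₂ hcard
  constructor <;> linarith

theorem abs_quadraticChar_le_one {K : Type*} [Field K] [Fintype K] [DecidableEq K] (a : K) :
    |quadraticChar K a| ≤ 1 := by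
  rcases eq_or_ne a 0 with rfl | ha
  · simp only [MulChar.map_zero, abs_zero, zero_le_one]
  · rcases quadraticChar_dichotomy ha with h | h <;> simp only [h, abs_neg, abs_one, le_refl]

theorem abs_sum_quadraticChar_le_card {K α : Type*} [Field K] [Fintype K] [DecidableEq K]
    [Fintype α] (φ : α → K) : |∑ x, quadraticChar K (φ x)| ≤ Fintype.card α :=
  (Finset.abs_sum_le_sum_abs _ _).trans
    ((Finset.sum_le_card_nsmul _ _ 1 fun x _ => abs_quadraticChar_le_one (φ x)).trans_eq
      (nsmul_one _))

theorem exists_abs_sum_quadraticChar_le {f : F[X]} (hf : ∀ (c : F) (r : F[X]), f ≠ C c * r ^ 2)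
    (hodd : Odd (Fintype.card F)) :
    ∃ B : ℝ, ∀ (n : ℕ) (K : Type*) [Field K] [Fintype K] [DecidableEq K] [Algebra F K],
      Fintype.card K = Fintype.card F ^ n →
      |((∑ x : K, quadraticChar K (aeval x f) : ℤ) : ℝ)| ≤
        B * (Fintype.card F : ℝ) ^ ((n : ℝ) / 2) := by
  have hq : 1 < Fintype.card F := Fintype.one_lt_card
  have hq1 : (1 : ℝ) ≤ Fintype.card F := mod_cast hq.le
  set q := Fintype.card F
  set d := f.natDegree
  obtain ⟨j, hj⟩ := pow_unbounded_of_one_lt (3 * d) hq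
  refine ⟨(2 * d + 1) * (q : ℝ) ^ (((j : ℝ) + 1) / 2), fun n K _ _ _ _ hK => ?_⟩
  suffices h : ∃ e : ℕ, 2 * e ≤ n + j + 1 ∧
      |∑ x : K, quadraticChar K (aeval x f)| ≤ (2 * d + 1) * (q : ℤ) ^ e by
    obtain ⟨e, he, hsum⟩ := h
    have he' : (e : ℝ) ≤ ((j : ℝ) + 1) / 2 + (n : ℝ) / 2 := by
      have : (2 : ℝ) * e ≤ n + j + 1 := mod_cast he
      linarith
    calc |((∑ x : K, quadraticChar K (aeval x f) : ℤ) : ℝ)|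
        ≤ (2 * d + 1) * (q : ℝ) ^ (e : ℝ) := by rw [Real.rpow_natCast]; exact_mod_cast hsum
      _ ≤ (2 * d + 1) * (q : ℝ) ^ (((j : ℝ) + 1) / 2 + (n : ℝ) / 2) := by gcongr
      _ = _ := by rw [Real.rpow_add (by positivity), mul_assoc]
  have hpos (e : ℕ) : (1 : ℤ) ≤ (q : ℤ) ^ e := mod_cast Nat.one_le_pow _ _ hq.le
  rcases lt_or_ge n j with hn | hn
  · refine ⟨n, by lia, (abs_sum_quadraticChar_le_card _).trans ?_⟩
    rw [hK, Nat.cast_pow]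
    nlinarith [hpos n]
  · obtain ⟨s, t, hst, hs, ht⟩ : ∃ s t, s + t = n ∧ s + j ≤ t ∧ 2 * t ≤ n + j + 1 :=
      ⟨(n - j) / 2, n - (n - j) / 2, by lia, by lia, by lia⟩
    have hlt : d * (q ^ s + 2) < q ^ t := by
      refine lt_of_lt_of_le ?_ (Nat.pow_le_pow_right hq.le hs)
      have := Nat.one_le_pow s q hq.le
      rw [pow_add]
      nlinarith
    refine ⟨t, ht, (abs_sum_quadraticChar_le hf hodd hlt (hst ▸ hK)).trans ?_⟩
    nlinarith [hpos t]

end Stepanov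

section Bezoutian

section CommRing

variable {R : Type*} [CommRing R]

/-- The coefficient of `y ^ 2` in the Bézoutian `(g(x) h(y) - g(y) h(x)) / (x - y)` of two cubics,
as a polynomial in `x`. -/
noncomputable def bezout₂ (g h : R[X]) : R[X] := C (g.coeff 3) * h - C (h.coeff 3) * g

/-- The coefficient of `y` in the Bézoutian `(g(x) h(y) - g(y) h(x)) / (x - y)` of two cubics,
as a polynomial in `x`. -/
noncomputable def bezout₁ (g h : R[X]) : R[X] :=
  X * bezout₂ g h + C (g.coeff 2) * h - C (h.coeff 2) * g

/-- The constant coefficient in `y` of the Bézoutian `(g(x) h(y) - g(y) h(x)) / (x - y)` of two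
cubics, as a polynomial in `x`. -/
noncomputable def bezout₀ (g h : R[X]) : R[X] :=
  X * bezout₁ g h + C (g.coeff 1) * h - C (h.coeff 1) * g

/-- The discriminant in `y` of the Bézoutian `(g(x) h(y) - g(y) h(x)) / (x - y)` of two cubics. Its
value at `x` decides whether the remaining two points of the fiber of `g / h` through `x` are
rational. -/
noncomputable def bezoutDiscr (g h : R[X]) : R[X] :=
  discrim (bezout₂ g h) (bezout₁ g h) (bezout₀ g h)

/-- A polynomial off whose roots `x` the value `g(x) / h(x)` is finite and has a fiber over it of
exactly one or three affine points, as told by `bezoutDiscr g h`. -/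
noncomputable def exceptionalPoly (g h : R[X]) : R[X] :=
  h * bezout₂ g h * bezoutDiscr g h * (derivative g * h - g * derivative h)

theorem map_bezoutDiscr {S : Type*} [CommRing S] (φ : R →+* S) (g h : R[X]) :
    (bezoutDiscr g h).map φ = bezoutDiscr (g.map φ) (h.map φ) := by
  simp only [bezoutDiscr, bezout₀, bezout₁, bezout₂, discrim, Polynomial.map_sub,
    Polynomial.map_add, Polynomial.map_mul, Polynomial.map_pow, Polynomial.map_ofNat, map_X, map_C,
    coeff_map]

theorem map_exceptionalPoly {S : Type*} [CommRing S] (φ : R →+* S) (g h : R[X]) :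
    (exceptionalPoly g h).map φ = exceptionalPoly (g.map φ) (h.map φ) := by
  simp only [exceptionalPoly, bezout₂, Polynomial.map_mul, Polynomial.map_sub, map_bezoutDiscr,
    derivative_map, map_C, coeff_map]

theorem bezoutDiscr_C_mul_add_C_mul (α β γ δ : R) (g h : R[X]) :
    bezoutDiscr (C α * g + C β * h) (C γ * g + C δ * h) =
      C (α * δ - β * γ) ^ 2 * bezoutDiscr g h := by
  simp only [bezoutDiscr, bezout₀, bezout₁, bezout₂, discrim, coeff_add, coeff_C_mul, C_add, C_mul,
    C_sub]
  ring

theorem derivative_mul_sub_mul_derivative_C_mul_add_C_mul (α β γ δ : R) (g h : R[X]) :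
    derivative (C α * g + C β * h) * (C γ * g + C δ * h) -
        (C α * g + C β * h) * derivative (C γ * g + C δ * h) =
      C (α * δ - β * γ) * (derivative g * h - g * derivative h) := by
  simp only [derivative_add, derivative_C_mul, C_mul, C_sub]
  ring

theorem eq_of_natDegree_le_three {g : R[X]} (hg : g.natDegree ≤ 3) :
    g = C (g.coeff 3) * X ^ 3 + C (g.coeff 2) * X ^ 2 + C (g.coeff 1) * X + C (g.coeff 0) := by
  conv_lhs => rw [as_sum_range_C_mul_X_pow' g (Nat.lt_succ_of_le hg)]
  simp only [Finset.sum_range_succ, Finset.sum_range_zero]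
  ring

theorem eval_eq_of_natDegree_le_three {g : R[X]} (hg : g.natDegree ≤ 3) (x : R) :
    g.eval x = g.coeff 3 * x ^ 3 + g.coeff 2 * x ^ 2 + g.coeff 1 * x + g.coeff 0 := by
  conv_lhs => rw [eq_of_natDegree_le_three hg]
  simp only [eval_add, eval_mul, eval_C, eval_pow, eval_X]

theorem derivative_eq_of_natDegree_le_three {g : R[X]} (hg : g.natDegree ≤ 3) :
    derivative g = 3 * C (g.coeff 3) * X ^ 2 + 2 * C (g.coeff 2) * X + C (g.coeff 1) := by
  conv_lhs => rw [eq_of_natDegree_le_three hg]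
  simp only [derivative_add, derivative_C_mul, derivative_X_pow, derivative_X, derivative_C,
    Nat.cast_ofNat, map_ofNat, mul_one, add_zero, Nat.add_one_sub_one, pow_one]
  ring

theorem bezout_eval_mul_sub {g h : R[X]} (hg : g.natDegree ≤ 3) (hh : h.natDegree ≤ 3) (x y : R) :
    ((bezout₂ g h).eval x * y ^ 2 + (bezout₁ g h).eval x * y + (bezout₀ g h).eval x) * (x - y) =
      g.eval x * h.eval y - g.eval y * h.eval x := by
  simp only [bezout₀, bezout₁, bezout₂, eval_add, eval_sub, eval_mul, eval_C, eval_X]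
  have hevg := eval_eq_of_natDegree_le_three hg
  have hevh := eval_eq_of_natDegree_le_three hh
  linear_combination h.eval x * (hevg y - hevg x) - g.eval x * (hevh y - hevh x)

theorem bezout_mul_X_sq_add {g h : R[X]} (hg : g.natDegree ≤ 3) (hh : h.natDegree ≤ 3) :
    bezout₂ g h * X ^ 2 + bezout₁ g h * X + bezout₀ g h =
      derivative g * h - g * derivative h := by
  rw [derivative_eq_of_natDegree_le_three hg, derivative_eq_of_natDegree_le_three hh, bezout₀,
    bezout₁, bezout₂]
  ring

theorem eq_sq_mul_of_eval_eq_zero {p : R[X]} (hp : p.natDegree ≤ 3) {P : R} (h0 : p.eval P = 0)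
    (h1 : (derivative p).eval P = 0) : ∃ u v : R, p = (X - C P) ^ 2 * (C u * X + C v) := by
  rw [eval_eq_of_natDegree_le_three hp] at h0
  rw [derivative_eq_of_natDegree_le_three hp] at h1
  simp only [eval_add, eval_mul, eval_C, eval_pow, eval_X, eval_ofNat] at h1
  refine ⟨p.coeff 3, p.coeff 2 + 2 * P * p.coeff 3, ?_⟩
  have h0C := congrArg C h0
  have h1C := congrArg C h1
  simp only [C_add, C_mul, C_pow, C_0, C_ofNat] at h0C h1C ⊢
  conv_lhs => rw [eq_of_natDegree_le_three hp]
  linear_combination h0C + (X - C P) * h1C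

theorem discrim_translate (a b c t : R) :
    discrim a (b + 2 * t * a) (c + t * b + t ^ 2 * a) = discrim a b c := by
  rw [discrim, discrim]
  ring

theorem bezoutDiscr_sq_mul {k : R[X]} (hk : k.natDegree ≤ 3) {P : R} (hkP : k.eval P = 1)
    (u v : R) :
    bezoutDiscr ((X - C P) ^ 2 * (C u * X + C v)) k =
      (C u * X + C v) * ((C u * X + C v) *
        ((C ((derivative k).eval P) * (X - C P) + 1) ^ 2 + 4 * C (k.coeff 3) * (X - C P) ^ 3) -
          4 * C u * (X - C P) * k) := by
  set p := (X - C P) ^ 2 * (C u * X + C v) with hp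
  set c := (derivative k).eval P with hc
  have hpX : p = Cubic.toPoly ⟨u, v - 2 * u * P, u * P ^ 2 - 2 * v * P, v * P ^ 2⟩ := by
    simp only [hp, Cubic.toPoly, C_sub, C_mul, C_pow, C_ofNat]
    ring
  have hp₃ : p.coeff 3 = u := by rw [hpX, Cubic.coeff_eq_a]
  have hp₂ : p.coeff 2 = v - 2 * u * P := by rw [hpX, Cubic.coeff_eq_b]
  have hp₁ : p.coeff 1 = u * P ^ 2 - 2 * v * P := by rw [hpX, Cubic.coeff_eq_c]
  rw [eval_eq_of_natDegree_le_three hk] at hkP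
  rw [derivative_eq_of_natDegree_le_three hk] at hc
  simp only [eval_add, eval_mul, eval_C, eval_pow, eval_X, eval_ofNat] at hc
  have hkX := eq_of_natDegree_le_three hk
  have hkPC := congrArg C hkP
  have hcC := congrArg C hc
  simp only [C_add, C_mul, C_pow, C_1, C_ofNat] at hkPC hcC
  have hA : bezout₂ p k = C u * k - C (k.coeff 3) * p := by rw [bezout₂, hp₃]
  have hB : bezout₁ p k + 2 * C P * bezout₂ p k =
      (C u * X + C v) * (C c * (X - C P) + 1) := by
    simp only [bezout₁, bezout₂, hp₃, hp₂, C_sub, C_mul, C_ofNat]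
    linear_combination (C u * X + C v) * (hkX - (X - C P) * hcC + hkPC)
  have hC : bezout₀ p k + C P * bezout₁ p k + C P ^ 2 * bezout₂ p k =
      (X - C P) * (C u * X + C v) := by
    simp only [bezout₀, bezout₁, bezout₂, hp₃, hp₂, hp₁, C_sub, C_mul, C_pow, C_ofNat]
    linear_combination (X - C P) * (C u * X + C v) * (hkX + hkPC)
  calc bezoutDiscr p k
      = discrim (bezout₂ p k) (bezout₁ p k + 2 * C P * bezout₂ p k)
          (bezout₀ p k + C P * bezout₁ p k + C P ^ 2 * bezout₂ p k) := by
        rw [bezoutDiscr, discrim_translate]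
    _ = _ := by
        rw [hB, hC, hA, hp, discrim]
        ring

end CommRing

section Field

variable {K : Type*} [Field K]

theorem ne_C_mul_sq_of_simple_root {f : K[X]} {x : K} (h0 : f.eval x = 0)
    (h1 : (derivative f).eval x ≠ 0) (c : K) (r : K[X]) : f ≠ C c * r ^ 2 := by
  rintro rfl
  refine h1 ?_
  rw [eval_mul, eval_C, eval_pow] at h0
  rcases mul_eq_zero.mp h0 with hc | hr
  · rw [derivative_C_mul, eval_mul, eval_C, hc, zero_mul]
  · rw [derivative_C_mul, derivative_pow_succ, eval_mul, eval_mul, eval_mul, pow_one,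
      pow_eq_zero_iff two_ne_zero |>.mp hr, mul_zero, zero_mul, mul_zero]

theorem ne_C_mul_sq_of_odd_natDegree {f : K[X]} (hf : Odd f.natDegree) (c : K) (r : K[X]) :
    f ≠ C c * r ^ 2 := by
  rintro rfl
  rcases eq_or_ne c 0 with rfl | hc
  · simp at hf
  · rw [natDegree_C_mul hc, natDegree_pow] at hf
    exact Nat.not_odd_iff_even.mpr (even_two_mul _) hf

theorem natDegree_C_mul_cube_add_sq {a : K} (ha : a ≠ 0) (b P : K) :
    (C a * (X - C P) ^ 3 + (C b * (X - C P) + 1) ^ 2).natDegree = 3 := by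
  compute_degree!

-- The discriminant has odd degree if `u = 0`, and otherwise a simple root at the root of `u X + v`.
theorem bezoutDiscr_sq_mul_ne_C_mul_sq (h2 : (2 : K) ≠ 0) {k : K[X]} (hk : k.natDegree ≤ 3) {P : K}
    (hkP : k.eval P = 1) {u v : K} (hP : u * P + v ≠ 0)
    (hcop : IsCoprime ((X - C P) ^ 2 * (C u * X + C v)) k) (huk : u ≠ 0 ∨ k.coeff 3 ≠ 0)
    (c : K) (r : K[X]) : bezoutDiscr ((X - C P) ^ 2 * (C u * X + C v)) k ≠ C c * r ^ 2 := by
  have h4 : (4 : K) ≠ 0 := by rw [show (4 : K) = 2 * 2 by norm_num]; exact mul_ne_zero h2 h2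
  rw [bezoutDiscr_sq_mul hk hkP]
  rcases eq_or_ne u 0 with rfl | hu
  · refine ne_C_mul_sq_of_odd_natDegree ?_ c r
    have hform : (C 0 * X + C v) * ((C 0 * X + C v) *
        ((C ((derivative k).eval P) * (X - C P) + 1) ^ 2 + 4 * C (k.coeff 3) * (X - C P) ^ 3) -
          4 * C 0 * (X - C P) * k) = C (v ^ 2) *
        (C (4 * k.coeff 3) * (X - C P) ^ 3 + (C ((derivative k).eval P) * (X - C P) + 1) ^ 2) := by
      simp only [C_0, C_mul, C_pow, C_ofNat]
      ring
    have hv : v ^ 2 ≠ 0 := pow_ne_zero 2 (by simpa only [zero_mul, zero_add] using hP)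
    have hk3 : 4 * k.coeff 3 ≠ 0 := mul_ne_zero h4 (huk.resolve_left (not_not_intro rfl))
    rw [hform, natDegree_C_mul hv, natDegree_C_mul_cube_add_sq hk3]
    decide
  · have hℓ : (C u * X + C v).eval (-v / u) = 0 := by
      simp only [eval_add, eval_mul, eval_C, eval_X]
      field_simp
      ring
    have hkx : k.eval (-v / u) ≠ 0 := fun h0 => by
      obtain ⟨a, b, hab⟩ := hcop
      simpa [hℓ, h0] using congrArg (eval (-v / u)) hab
    have hxP : -v / u - P ≠ 0 := fun h0 => hP (by field_simp at h0; linear_combination -h0)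
    refine ne_C_mul_sq_of_simple_root (x := -v / u) (by rw [eval_mul, hℓ, zero_mul]) ?_ c r
    simp only [derivative_mul, derivative_add, derivative_X, derivative_C, eval_add, eval_mul,
      eval_sub, hℓ, eval_C, eval_X, eval_ofNat, zero_mul, zero_add, add_zero,
      mul_one, zero_sub]
    exact mul_ne_zero hu (neg_ne_zero.mpr (mul_ne_zero (mul_ne_zero (mul_ne_zero h4 hu) hxP) hkx))

theorem bezoutDiscr_ne_C_mul_sq_of_eval_eq (h2 : (2 : K) ≠ 0) {p k : K[X]}
    (hcop : IsCoprime p k) (hp : p.natDegree ≤ 3) (hk : k.natDegree ≤ 3)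
    (h3 : p.coeff 3 ≠ 0 ∨ k.coeff 3 ≠ 0) {P : K} (hpP : p.eval P = 0) (hkP : k.eval P = 1)
    (hP : (derivative p * k - p * derivative k).eval P = 0)
    (hP' : (derivative (derivative p * k - p * derivative k)).eval P ≠ 0) (c : K) (r : K[X]) :
    bezoutDiscr p k ≠ C c * r ^ 2 := by
  obtain ⟨u, v, rfl⟩ := eq_sq_mul_of_eval_eq_zero hp hpP (by
    simpa only [eval_sub, eval_mul, hpP, hkP, mul_one, zero_mul, sub_zero] using hP)
  refine bezoutDiscr_sq_mul_ne_C_mul_sq h2 hk hkP (fun hℓ => hP' ?_) hcop ?_ c r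
  · have hℓ' : (C u * X + C v).eval P = 0 := by
      simpa only [eval_add, eval_mul, eval_C, eval_X] using hℓ
    simp [derivative_pow_succ, hℓ']
  · refine h3.imp_left fun hp3 hu => hp3 (coeff_eq_zero_of_natDegree_lt ?_)
    rw [hu, C_0, zero_mul, zero_add]
    refine (natDegree_mul_C_le _ _).trans_lt ?_
    rw [natDegree_pow, natDegree_X_sub_C]
    decide

theorem exists_unimodular_eval_eq {g h : K[X]} (hcop : IsCoprime g h) (P : K) :
    ∃ α β γ δ : K, α * δ - β * γ = 1 ∧
      (C α * g + C β * h).eval P = 0 ∧ (C γ * g + C δ * h).eval P = 1 := by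
  obtain ⟨a, b, hab⟩ := hcop
  have hP := congrArg (eval P) hab
  simp only [eval_add, eval_mul, eval_one] at hP
  refine ⟨h.eval P, -g.eval P, a.eval P, b.eval P, by linear_combination hP, ?_, ?_⟩
  · simp only [eval_add, eval_mul, eval_C]
    ring
  · simpa only [eval_add, eval_mul, eval_C] using hP

-- A unimodular substitution in the target changes neither the discriminant nor the Wronskian, and
-- makes the value at `P` vanish, so that the numerator acquires the square factor `(X - P) ^ 2`.
theorem bezoutDiscr_ne_C_mul_sq_of_simple_root (h2 : (2 : K) ≠ 0) {g h : K[X]}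
    (hcop : IsCoprime g h) (hg : g.natDegree ≤ 3) (hh : h.natDegree ≤ 3)
    (h3 : g.coeff 3 ≠ 0 ∨ h.coeff 3 ≠ 0) {P : K}
    (hP : (derivative g * h - g * derivative h).eval P = 0)
    (hP' : (derivative (derivative g * h - g * derivative h)).eval P ≠ 0) (c : K) (r : K[X]) :
    bezoutDiscr g h ≠ C c * r ^ 2 := by
  obtain ⟨α, β, γ, δ, hdet, hpP, hkP⟩ := exists_unimodular_eval_eq hcop P
  set p := C α * g + C β * h with hp
  set k := C γ * g + C δ * h with hk
  have hdetC : C α * C δ - C β * C γ = (1 : K[X]) := by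
    rw [← C_mul, ← C_mul, ← C_sub, hdet, C_1]
  have hgpk : g = C δ * p - C β * k := by
    rw [hp, hk]
    linear_combination -g * hdetC
  have hhpk : h = C α * k - C γ * p := by
    rw [hp, hk]
    linear_combination -h * hdetC
  have hdeg (a b : K) : (C a * g + C b * h).natDegree ≤ 3 := natDegree_add_le_of_le
    ((natDegree_C_mul_le _ _).trans hg) ((natDegree_C_mul_le _ _).trans hh)
  have hpk3 : p.coeff 3 ≠ 0 ∨ k.coeff 3 ≠ 0 := by
    contrapose! h3
    rw [hgpk, hhpk]
    simp only [coeff_sub, coeff_C_mul, h3.1, h3.2, mul_zero, sub_zero, and_self]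
  have hpk : IsCoprime p k := by
    obtain ⟨a, b, hab⟩ := hcop
    refine ⟨a * C δ - b * C γ, b * C α - a * C β, ?_⟩
    rw [← hab, hp, hk]
    linear_combination (a * g + b * h) * hdetC
  have hW : derivative p * k - p * derivative k = derivative g * h - g * derivative h := by
    rw [derivative_mul_sub_mul_derivative_C_mul_add_C_mul, hdet, C_1, one_mul]
  have hD : bezoutDiscr p k = bezoutDiscr g h := by
    rw [bezoutDiscr_C_mul_add_C_mul, hdet, C_1, one_pow, one_mul]
  rw [← hW] at hP hP'
  rw [← hD]
  exact bezoutDiscr_ne_C_mul_sq_of_eval_eq h2 hpk (hdeg α β) (hdeg γ δ) hpk3 hpP hkP hP hP' c r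

theorem bezoutDiscr_ne_C_mul_sq {L : Type*} [Field L] [Algebra K L] (h2 : (2 : K) ≠ 0)
    {g h : K[X]} (hcop : IsCoprime g h) (hg : g.natDegree ≤ 3) (hh : h.natDegree ≤ 3)
    (h3 : g.coeff 3 ≠ 0 ∨ h.coeff 3 ≠ 0) {P : L}
    (hP : aeval P (derivative g * h - g * derivative h) = 0)
    (hP' : aeval P (derivative (derivative g * h - g * derivative h)) ≠ 0) (c : K) (r : K[X]) :
    bezoutDiscr g h ≠ C c * r ^ 2 := by
  intro hD
  rw [← eval_map_algebraMap] at hP hP'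
  simp only [Polynomial.map_sub, Polynomial.map_mul, ← derivative_map] at hP hP'
  refine bezoutDiscr_ne_C_mul_sq_of_simple_root
    (by simpa only [map_ofNat] using (_root_.map_ne_zero (algebraMap K L)).mpr h2)
    (hcop.map (mapRingHom (algebraMap K L))) (natDegree_map_le.trans hg) (natDegree_map_le.trans hh)
    ?_ hP hP' (algebraMap K L c) (r.map (algebraMap K L)) ?_
  · simpa only [coe_mapRingHom, coeff_map, ne_eq, map_eq_zero] using h3
  · rw [coe_mapRingHom, ← map_bezoutDiscr, hD, Polynomial.map_mul, Polynomial.map_pow, map_C]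

theorem bezout₂_ne_zero {g h : K[X]} (h3 : g.coeff 3 ≠ 0 ∨ h.coeff 3 ≠ 0)
    (hW : derivative g * h - g * derivative h ≠ 0) : bezout₂ g h ≠ 0 := by
  intro hA
  have hA' : C (g.coeff 3) * derivative h - C (h.coeff 3) * derivative g = 0 := by
    simpa only [bezout₂, derivative_sub, derivative_C_mul, derivative_zero] using
      congrArg derivative hA
  rw [bezout₂] at hA
  rcases h3 with h3 | h3
  · refine (mul_ne_zero (C_ne_zero.mpr h3) hW) ?_
    linear_combination derivative g * hA - g * hA'
  · refine (mul_ne_zero (C_ne_zero.mpr h3) hW) ?_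
    linear_combination derivative h * hA - h * hA'

theorem exceptionalPoly_ne_zero {g h : K[X]} (h3 : g.coeff 3 ≠ 0 ∨ h.coeff 3 ≠ 0)
    (hD : bezoutDiscr g h ≠ 0) (hW : derivative g * h - g * derivative h ≠ 0) :
    exceptionalPoly g h ≠ 0 := by
  have hh : h ≠ 0 := by
    rintro rfl
    simp at hW
  exact mul_ne_zero (mul_ne_zero (mul_ne_zero hh (bezout₂_ne_zero h3 hW)) hD) hW

end Field

end Bezoutian

section Counting

theorem card_image_eq_sum_one_div_card_fiber {α β : Type*} [DecidableEq β] (s : Finset α)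
    (f : α → β) :
    ((s.image f).card : ℝ) = ∑ x ∈ s, (1 : ℝ) / ((s.filter fun y => f y = f x).card : ℝ) := by
  rw [Finset.card_eq_sum_ones, Nat.cast_sum, Nat.cast_one]
  refine Finset.sum_image' _ fun x hx => ?_
  have hpos : ((s.filter fun y => f y = f x).card : ℝ) ≠ 0 := Nat.cast_ne_zero.mpr
    (Finset.card_ne_zero_of_mem (Finset.mem_filter.mpr ⟨hx, rfl⟩))
  rw [Finset.sum_congr rfl fun y hy => by rw [(Finset.mem_filter.mp hy).2], Finset.sum_const,
    nsmul_eq_mul, mul_one_div_cancel hpos]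

variable {K : Type*} [Field K]

theorem aeval_ne_zero_of_isCoprime_of_aeval_eq_mul {A : Type*} [CommRing A] [Nontrivial A]
    [Algebra K A] {g h : K[X]} (hcop : IsCoprime g h) {a x : A}
    (hx : aeval x g = a * aeval x h) : aeval x h ≠ 0 := fun h0 =>
  (aeval_ne_zero_of_isCoprime hcop x).elim (fun hg => hg (by rw [hx, h0, mul_zero])) fun hh => hh h0

theorem eval_ne_zero_of_isCoprime_of_eval_eq_mul {g h : K[X]} (hcop : IsCoprime g h) {a x : K}
    (hx : g.eval x = a * h.eval x) : h.eval x ≠ 0 :=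
  aeval_ne_zero_of_isCoprime_of_aeval_eq_mul hcop (a := a) hx

theorem abs_sum_le_mul_natDegree [Fintype K] {E : K[X]} (hE : E ≠ 0) {t : K → ℝ} {c : ℝ}
    (ht : ∀ x, E.eval x ≠ 0 → t x = 0) (hc : ∀ x, |t x| ≤ c) :
    |∑ x, t x| ≤ c * E.natDegree := by
  classical
  set S : Finset K := Finset.univ.filter fun x => E.eval x = 0
  have hS0 : ∀ x ∈ S, aeval x E = 0 := fun x hx => (Finset.mem_filter.mp hx).2
  have hSt : ∀ x ∈ Finset.univ, x ∉ S → t x = 0 := fun x _ hx => ht x fun h0 =>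
    hx (Finset.mem_filter.mpr ⟨Finset.mem_univ x, h0⟩)
  have hc0 : 0 ≤ c := (abs_nonneg (t 0)).trans (hc 0)
  calc |∑ x, t x| = |∑ x ∈ S, t x| := by rw [Finset.sum_subset (Finset.subset_univ S) hSt]
    _ ≤ ∑ x ∈ S, |t x| := Finset.abs_sum_le_sum_abs _ _
    _ ≤ S.card • c := Finset.sum_le_card_nsmul _ _ _ fun x _ => hc x
    _ = c * S.card := by rw [nsmul_eq_mul, mul_comm]
    _ ≤ c * E.natDegree := by
      gcongr
      exact card_le_natDegree_of_aeval_eq_zero hE hS0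

variable [Fintype K] [DecidableEq K]

theorem card_quadratic_roots (hK : ringChar K ≠ 2) {a b c : K} (ha : a ≠ 0) :
    ((Finset.univ.filter fun y => a * (y * y) + b * y + c = 0).card : ℤ) =
      quadraticChar K (discrim a b c) + 1 := by
  have h2 : (2 : K) ≠ 0 := Ring.two_ne_zero hK
  have : NeZero (2 : K) := ⟨h2⟩
  have h2a : 2 * a ≠ 0 := mul_ne_zero h2 ha
  rw [← quadraticChar_card_sqrts hK]
  congr 1
  refine Finset.card_bij (fun y _ => 2 * a * y + b) ?_ ?_ ?_
  · intro y hy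
    simpa using (quadratic_eq_zero_iff_discrim_eq_sq ha y |>.mp (Finset.mem_filter.mp hy).2).symm
  · intro y _ z _ hyz
    exact mul_left_cancel₀ h2a (add_right_cancel hyz)
  · intro s hs
    have hs' : 2 * a * ((s - b) / (2 * a)) + b = s := by field_simp; ring
    refine ⟨(s - b) / (2 * a), Finset.mem_filter.mpr ⟨Finset.mem_univ _, ?_⟩, hs'⟩
    rw [quadratic_eq_zero_iff_discrim_eq_sq ha, hs']
    simpa [eq_comm] using hs

/-- The affine fiber of `g / h` through `x`, with the equation `g(y) / h(y) = g(x) / h(x)`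
cross-multiplied so that it makes sense at the poles. -/
noncomputable def affineFiber (g h : K[X]) (x : K) : Finset K :=
  Finset.univ.filter fun y => g.eval y * h.eval x = g.eval x * h.eval y

theorem card_affineFiber_pos (g h : K[X]) (x : K) : 0 < (affineFiber g h x).card :=
  Finset.card_pos.mpr ⟨x, Finset.mem_filter.mpr ⟨Finset.mem_univ x, rfl⟩⟩

theorem card_affineFiber_eq_quadraticChar_add_two (hK : ringChar K ≠ 2) {g h : K[X]}
    (hg : g.natDegree ≤ 3) (hh : h.natDegree ≤ 3) {x : K} (hA : (bezout₂ g h).eval x ≠ 0)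
    (hW : (derivative g * h - g * derivative h).eval x ≠ 0) :
    ((affineFiber g h x).card : ℤ) = quadraticChar K ((bezoutDiscr g h).eval x) + 2 := by
  set A := (bezout₂ g h).eval x with hAx
  set B := (bezout₁ g h).eval x with hBx
  set E := (bezout₀ g h).eval x with hEx
  have hfib : affineFiber g h x =
      insert x (Finset.univ.filter fun y => A * (y * y) + B * y + E = 0) := by
    ext y
    simp only [affineFiber, Finset.mem_filter, Finset.mem_univ, true_and, Finset.mem_insert]
    rw [eq_comm, ← sub_eq_zero, ← bezout_eval_mul_sub hg hh, mul_eq_zero, sub_eq_zero, or_comm,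
      eq_comm (a := x), pow_two]
  have hx : x ∉ Finset.univ.filter fun y => A * (y * y) + B * y + E = 0 := by
    rw [← bezout_mul_X_sq_add hg hh] at hW
    simpa [← pow_two] using hW
  have hD : (bezoutDiscr g h).eval x = discrim A B E := by
    simp [bezoutDiscr, discrim, hAx, hBx, hEx]
  rw [hfib, Finset.card_insert_of_notMem hx, Nat.cast_succ, card_quadratic_roots hK hA, hD]
  ring

theorem three_div_card_affineFiber (hK : ringChar K ≠ 2) {g h : K[X]} (hg : g.natDegree ≤ 3)
    (hh : h.natDegree ≤ 3) {x : K} (hA : (bezout₂ g h).eval x ≠ 0)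
    (hD : (bezoutDiscr g h).eval x ≠ 0)
    (hW : (derivative g * h - g * derivative h).eval x ≠ 0) :
    (3 : ℝ) / (affineFiber g h x).card = 2 - quadraticChar K ((bezoutDiscr g h).eval x) := by
  have hcard := congrArg (Int.cast : ℤ → ℝ)
    (card_affineFiber_eq_quadraticChar_add_two hK hg hh hA hW)
  rw [Int.cast_natCast] at hcard
  rw [hcard]
  rcases quadraticChar_dichotomy hD with hχ | hχ <;> rw [hχ] <;> norm_num

/-- The values of `K` that `g / h` omits on the affine line `K`. -/
noncomputable def omittedValues (g h : K[X]) : Finset K :=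
  Finset.univ.filter fun α => ∀ x, g.eval x ≠ α * h.eval x

theorem omittedValues_eq_compl_image {g h : K[X]} (hcop : IsCoprime g h) :
    omittedValues g h =
      ((Finset.univ.filter fun x => h.eval x ≠ 0).image fun x => g.eval x / h.eval x)ᶜ := by
  ext α
  simp only [omittedValues, Finset.mem_filter, Finset.mem_univ, true_and, Finset.mem_compl,
    Finset.mem_image, not_exists, not_and]
  refine forall_congr' fun x => ⟨fun hx hhx hα => hx ?_, fun hx hα => ?_⟩
  · rw [← hα, div_mul_cancel₀ _ hhx]
  · have hhx := eval_ne_zero_of_isCoprime_of_eval_eq_mul hcop hα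
    exact hx hhx (by rw [hα, mul_div_cancel_right₀ _ hhx])

theorem filter_eval_div_eval_eq_affineFiber {g h : K[X]} (hcop : IsCoprime g h) {x : K}
    (hx : h.eval x ≠ 0) :
    ((Finset.univ.filter fun y => h.eval y ≠ 0).filter fun y =>
        g.eval y / h.eval y = g.eval x / h.eval x) = affineFiber g h x := by
  ext y
  simp only [affineFiber, Finset.mem_filter, Finset.mem_univ, true_and]
  refine ⟨fun ⟨hy, hxy⟩ => (div_eq_div_iff hy hx).mp hxy, fun hxy => ?_⟩
  have hy : h.eval y ≠ 0 := eval_ne_zero_of_isCoprime_of_eval_eq_mul hcop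
    (a := g.eval x / h.eval x) (by rw [div_mul_eq_mul_div, ← hxy, mul_div_cancel_right₀ _ hx])
  exact ⟨hy, (div_eq_div_iff hy hx).mpr hxy⟩

theorem card_omittedValues_eq {g h : K[X]} (hcop : IsCoprime g h) :
    ((omittedValues g h).card : ℝ) =
      Fintype.card K - ∑ x, if h.eval x ≠ 0 then (1 : ℝ) / (affineFiber g h x).card else 0 := by
  rw [omittedValues_eq_compl_image hcop, Finset.card_compl, Nat.cast_sub (Finset.card_le_univ _),
    card_image_eq_sum_one_div_card_fiber, ← Finset.sum_filter]
  refine congrArg _ (Finset.sum_congr rfl fun x hx => ?_)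
  rw [filter_eval_div_eval_eq_affineFiber hcop (Finset.mem_filter.mp hx).2]

theorem abs_three_mul_card_omittedValues_sub_le (hK : ringChar K ≠ 2) {g h : K[X]}
    (hcop : IsCoprime g h) (hg : g.natDegree ≤ 3) (hh : h.natDegree ≤ 3)
    (hE : exceptionalPoly g h ≠ 0) :
    |3 * ((omittedValues g h).card : ℝ) - Fintype.card K -
        ((∑ x : K, quadraticChar K ((bezoutDiscr g h).eval x) : ℤ) : ℝ)| ≤
      3 * (exceptionalPoly g h).natDegree := by
  set χ : K → ℝ := fun x => (quadraticChar K ((bezoutDiscr g h).eval x) : ℤ) with hχ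
  set T : K → ℝ := fun x => if h.eval x ≠ 0 then (1 : ℝ) / (affineFiber g h x).card else 0 with hT
  have hgood : ∀ x, (exceptionalPoly g h).eval x ≠ 0 → 2 - χ x - 3 * T x = 0 := by
    intro x hx
    simp only [exceptionalPoly, eval_mul, mul_ne_zero_iff] at hx
    obtain ⟨⟨⟨hhx, hA⟩, hD⟩, hW⟩ := hx
    rw [hT, sub_eq_zero]
    simp only [if_pos hhx, mul_one_div, hχ, three_div_card_affineFiber hK hg hh hA hD hW]
  have hall : ∀ x, |2 - χ x - 3 * T x| ≤ 3 := by
    intro x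
    have hT0 : 0 ≤ T x := by
      simp only [hT]
      positivity
    have hT1 : T x ≤ 1 := by
      simp only [hT]
      split_ifs
      · exact div_le_self zero_le_one (Nat.one_le_cast.mpr (card_affineFiber_pos g h x))
      · exact zero_le_one
    have hχ1 : |χ x| ≤ 1 := by
      simp only [hχ]
      exact_mod_cast abs_quadraticChar_le_one ((bezoutDiscr g h).eval x)
    rw [abs_le] at hχ1 ⊢
    constructor <;> linarith
  have hsum : 3 * ((omittedValues g h).card : ℝ) - Fintype.card K -
      ((∑ x : K, quadraticChar K ((bezoutDiscr g h).eval x) : ℤ) : ℝ) =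
        ∑ x, (2 - χ x - 3 * T x) := by
    rw [card_omittedValues_eq hcop, Int.cast_sum, Finset.sum_sub_distrib, Finset.sum_sub_distrib,
      Finset.sum_const, Finset.card_univ, nsmul_eq_mul, ← Finset.mul_sum]
    ring
  rw [hsum]
  exact abs_sum_le_mul_natDegree hE hgood hall

end Counting

section Transform

variable {F : Type*} [Field F]

theorem sum_coeff_mul_pow_mul_pow_eq {A : Type*} [CommRing A] [Algebra F A] (f : F[X]) {a b α : A}
    (hab : a = α * b) :
    ∑ i ∈ Finset.range (f.natDegree + 1),
        algebraMap F A (f.coeff i) * a ^ i * b ^ (f.natDegree - i) =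
      b ^ f.natDegree * aeval α f := by
  rw [aeval_eq_sum_range, Finset.mul_sum]
  refine Finset.sum_congr rfl fun i hi => ?_
  rw [← pow_sub_mul_pow b (Finset.mem_range_succ_iff.mp hi), hab, mul_pow, Algebra.smul_def]
  ring

theorem aeval_ratTransform {A : Type*} [CommRing A] [Algebra F A] {g h : F[X]} (f : F[X])
    {α β : A} (hβ : aeval β g = α * aeval β h) :
    aeval β (ratTransform g h f) = aeval β h ^ f.natDegree * aeval α f := by
  rw [← sum_coeff_mul_pow_mul_pow_eq f hβ, ratTransform]
  simp only [map_sum, map_mul, map_pow, aeval_C]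

theorem coeff_max_natDegree_ne_zero {g h : F[X]} (hcop : IsCoprime g h) :
    g.coeff (max g.natDegree h.natDegree) ≠ 0 ∨ h.coeff (max g.natDegree h.natDegree) ≠ 0 := by
  rcases eq_or_ne g 0 with rfl | hg
  · rw [natDegree_zero, zero_max]
    exact Or.inr (leadingCoeff_ne_zero.mpr (isCoprime_zero_left.mp hcop).ne_zero)
  rcases eq_or_ne h 0 with rfl | hh
  · rw [natDegree_zero, max_zero]
    exact Or.inl (leadingCoeff_ne_zero.mpr hg)
  rcases max_choice g.natDegree h.natDegree with hd | hd <;> rw [hd]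
  · exact Or.inl (leadingCoeff_ne_zero.mpr hg)
  · exact Or.inr (leadingCoeff_ne_zero.mpr hh)

theorem natDegree_ratTransform_le {g h : F[X]} {d : ℕ} (hg : g.natDegree ≤ d)
    (hh : h.natDegree ≤ d) (f : F[X]) : (ratTransform g h f).natDegree ≤ d * f.natDegree := by
  refine natDegree_sum_le_of_forall_le _ _ fun i hi => ?_
  have hi' := Finset.mem_range_succ_iff.mp hi
  calc (C (f.coeff i) * g ^ i * h ^ (f.natDegree - i)).natDegree
      ≤ i * d + (f.natDegree - i) * d := by
        rw [mul_assoc]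
        exact (natDegree_C_mul_le _ _).trans
          (natDegree_mul_le_of_le (natDegree_pow_le_of_le i hg) (natDegree_pow_le_of_le _ hh))
    _ = d * f.natDegree := by rw [← add_mul, Nat.add_sub_cancel' hi', mul_comm]

theorem coeff_ratTransform {g h : F[X]} {d : ℕ} (hg : g.natDegree ≤ d) (hh : h.natDegree ≤ d)
    (f : F[X]) :
    (ratTransform g h f).coeff (d * f.natDegree) = ∑ i ∈ Finset.range (f.natDegree + 1),
      f.coeff i * g.coeff d ^ i * h.coeff d ^ (f.natDegree - i) := by
  rw [ratTransform, finsetSum_coeff]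
  refine Finset.sum_congr rfl fun i hi => ?_
  have hdeg : d * f.natDegree = i * d + (f.natDegree - i) * d := by
    rw [← add_mul, Nat.add_sub_cancel' (Finset.mem_range_succ_iff.mp hi), mul_comm]
  rw [mul_assoc, coeff_C_mul, hdeg, coeff_mul_add_eq_of_natDegree_le (natDegree_pow_le_of_le i hg)
    (natDegree_pow_le_of_le _ hh), coeff_pow_of_natDegree_le hg, coeff_pow_of_natDegree_le hh,
    mul_assoc]

theorem natDegree_ratTransform {g h : F[X]} (hcop : IsCoprime g h) {f : F[X]}
    (hf : ∀ x, ¬ f.IsRoot x) :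
    (ratTransform g h f).natDegree = max g.natDegree h.natDegree * f.natDegree := by
  set d := max g.natDegree h.natDegree
  have hg : g.natDegree ≤ d := le_max_left _ _
  have hh : h.natDegree ≤ d := le_max_right _ _
  refine natDegree_eq_of_le_of_coeff_ne_zero (natDegree_ratTransform_le hg hh f) ?_
  rw [coeff_ratTransform hg hh]
  by_cases hhd : h.coeff d = 0
  · have hgd : g.coeff d ≠ 0 := (coeff_max_natDegree_ne_zero hcop).resolve_right (not_not_intro hhd)
    have hf0 : f ≠ 0 := by
      rintro rfl
      exact hf 0 eval_zero
    rw [Finset.sum_range_succ, Finset.sum_eq_zero, zero_add, Nat.sub_self, pow_zero, mul_one]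
    · exact mul_ne_zero (leadingCoeff_ne_zero.mpr hf0) (pow_ne_zero _ hgd)
    · intro i hi
      rw [hhd, zero_pow (Nat.sub_ne_zero_of_lt (Finset.mem_range.mp hi)), mul_zero]
  · have hsum := sum_coeff_mul_pow_mul_pow_eq (A := F) f (div_mul_cancel₀ (g.coeff d) hhd).symm
    simp only [Algebra.algebraMap_self, RingHom.id_apply] at hsum
    rw [hsum]
    exact mul_ne_zero (pow_ne_zero _ hhd) (hf _)

theorem irreducible_iff_natDegree_minpoly_eq {E : Type*} [Field E] [Algebra F E] {p : F[X]}
    (hp : p ≠ 0) {β : E} (hβ : aeval β p = 0) :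
    Irreducible p ↔ (minpoly F β).natDegree = p.natDegree := by
  have hint : IsIntegral F β := IsAlgebraic.isIntegral ⟨p, hp, hβ⟩
  have hdvd := minpoly.dvd F β hβ
  refine ⟨fun hirr => ?_, fun hdeg => ?_⟩
  · exact natDegree_eq_of_degree_eq (degree_eq_degree_of_associated
      ((minpoly.irreducible hint).associated_of_dvd hirr hdvd))
  · exact (associated_of_dvd_of_natDegree_le hdvd hp hdeg.ge).irreducible (minpoly.irreducible hint)

variable {K : Type*} [Field K] [Algebra F K]

/-- The polynomial over `K` whose roots are the points of the fiber of `g / h` over `α`. -/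
noncomputable def fiberPoly (g h : F[X]) (α : K) : K[X] :=
  g.map (algebraMap F K) - C α * h.map (algebraMap F K)

theorem aeval_fiberPoly_eq_zero_iff {E : Type*} [Field E] [Algebra F E] [Algebra K E]
    [IsScalarTower F K E] {g h : F[X]} {α : K} {β : E} :
    aeval β (fiberPoly g h α) = 0 ↔ aeval β g = algebraMap K E α * aeval β h := by
  rw [fiberPoly, map_sub, map_mul, aeval_map_algebraMap, aeval_map_algebraMap, aeval_C, sub_eq_zero]

theorem natDegree_fiberPoly {g h : F[X]} (hcop : IsCoprime g h) {α : K}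
    (hα : α ∉ (algebraMap F K).range) :
    (fiberPoly g h α).natDegree = max g.natDegree h.natDegree := by
  set d := max g.natDegree h.natDegree
  refine natDegree_eq_of_le_of_coeff_ne_zero ?_ fun h0 => ?_
  · exact (natDegree_sub_le _ _).trans (max_le_max natDegree_map_le
      ((natDegree_C_mul_le _ _).trans natDegree_map_le))
  · rw [fiberPoly, coeff_sub, coeff_C_mul, coeff_map, coeff_map, sub_eq_zero] at h0
    by_cases hhd : h.coeff d = 0
    · rw [hhd, map_zero, mul_zero, map_eq_zero] at h0
      exact (coeff_max_natDegree_ne_zero hcop).elim (· h0) (· hhd)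
    · refine hα ⟨g.coeff d / h.coeff d, ?_⟩
      rw [map_div₀, h0, mul_div_cancel_right₀ _ ((_root_.map_ne_zero _).mpr hhd)]

theorem algebraMap_mem_adjoin_simple {E : Type*} [Field E] [Algebra F E] [Algebra K E]
    [IsScalarTower F K E] {g h : F[X]} (hcop : IsCoprime g h) {α : K}
    (hα : IntermediateField.adjoin F {α} = ⊤) {β : E}
    (hβ : aeval β g = algebraMap K E α * aeval β h) (k : K) :
    algebraMap K E k ∈ IntermediateField.adjoin F {β} := by
  have hmem (p : F[X]) : aeval β p ∈ IntermediateField.adjoin F {β} :=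
    IntermediateField.algebra_adjoin_le_adjoin F {β} (aeval_mem_adjoin_singleton F β)
  have hβh := aeval_ne_zero_of_isCoprime_of_aeval_eq_mul hcop hβ
  have hle : IntermediateField.adjoin F {α} ≤
      (IntermediateField.adjoin F {β}).comap (IsScalarTower.toAlgHom F K E) := by
    rw [IntermediateField.adjoin_simple_le_iff]
    change algebraMap K E α ∈ IntermediateField.adjoin F {β}
    rw [← mul_div_cancel_right₀ (algebraMap K E α) hβh, ← hβ]
    exact div_mem (hmem g) (hmem h)
  rw [hα] at hle
  exact hle (IntermediateField.mem_top (x := k))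

theorem restrictScalars_adjoin_simple {E : Type*} [Field E] [Algebra F E] [Algebra K E]
    [IsScalarTower F K E] {β : E}
    (hK : ∀ k : K, algebraMap K E k ∈ IntermediateField.adjoin F {β}) :
    (IntermediateField.adjoin K {β}).restrictScalars F = IntermediateField.adjoin F {β} := by
  refine le_antisymm (fun x hx => ?_) ?_
  · rw [IntermediateField.mem_restrictScalars] at hx
    induction hx using IntermediateField.adjoin_induction with
    | mem x hx => exact IntermediateField.subset_adjoin F {β} hx
    | algebraMap k => exact hK k
    | add x y _ _ hx hy => exact add_mem hx hy
    | inv x _ hx => exact inv_mem hx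
    | mul x y _ _ hx hy => exact mul_mem hx hy
  · exact IntermediateField.adjoin_simple_le_iff.mpr (IntermediateField.mem_adjoin_simple_self K β)

theorem natDegree_minpoly_eq_finrank_mul {E : Type*} [Field E] [Algebra F E] [Algebra K E]
    [IsScalarTower F K E] {g h : F[X]} (hcop : IsCoprime g h) {α : K}
    (hα : IntermediateField.adjoin F {α} = ⊤) {β : E} (hintF : IsIntegral F β)
    (hβ : aeval β g = algebraMap K E α * aeval β h) :
    (minpoly F β).natDegree = Module.finrank F K * (minpoly K β).natDegree := by
  have hres := restrictScalars_adjoin_simple (algebraMap_mem_adjoin_simple hcop hα hβ)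
  calc (minpoly F β).natDegree
      = Module.finrank F (IntermediateField.adjoin F {β}) :=
        (IntermediateField.adjoin.finrank hintF).symm
    _ = Module.finrank F ((IntermediateField.adjoin K {β}).restrictScalars F) := by rw [hres]
    _ = Module.finrank F K * Module.finrank K (IntermediateField.adjoin K {β}) :=
        (Module.finrank_mul_finrank F K (IntermediateField.adjoin K {β})).symm
    _ = Module.finrank F K * (minpoly K β).natDegree := by
        rw [IntermediateField.adjoin.finrank hintF.tower_top]

theorem irreducible_ratTransform_minpoly_iff [FiniteDimensional F K] {g h : F[X]}
    (hcop : IsCoprime g h) (hd : max g.natDegree h.natDegree ≠ 0) {α : K}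
    (hα : IntermediateField.adjoin F {α} = ⊤) (hα' : α ∉ (algebraMap F K).range) :
    Irreducible (ratTransform g h (minpoly F α)) ↔ Irreducible (fiberPoly g h α) := by
  have hint : IsIntegral F α := IsIntegral.of_finite F α
  have hroot : ∀ x, ¬ (minpoly F α).IsRoot x := fun x hx => hα'
    ⟨x, minpoly.root hint hx⟩
  have hT := natDegree_ratTransform hcop hroot
  have hP := natDegree_fiberPoly hcop hα'
  have hn : (minpoly F α).natDegree = Module.finrank F K :=
    (Field.primitive_element_iff_minpoly_natDegree_eq F α).mp hα
  have hn0 : Module.finrank F K ≠ 0 := Module.finrank_pos.ne'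
  have hP0 : fiberPoly g h α ≠ 0 := ne_zero_of_natDegree_gt (hP ▸ Nat.pos_of_ne_zero hd)
  have hT0 : ratTransform g h (minpoly F α) ≠ 0 := by
    refine ne_zero_of_natDegree_gt (n := 0) ?_
    rw [hT, hn]
    positivity
  obtain ⟨β, hβ⟩ := IsAlgClosed.exists_aeval_eq_zero (AlgebraicClosure K) (fiberPoly g h α)
    (fun h0 => hd (hP ▸ natDegree_eq_of_degree_eq_some h0))
  have hβ' := aeval_fiberPoly_eq_zero_iff.mp hβ
  have hβT : aeval β (ratTransform g h (minpoly F α)) = 0 := by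
    rw [aeval_ratTransform _ hβ', aeval_algebraMap_apply, minpoly.aeval, map_zero, mul_zero]
  rw [irreducible_iff_natDegree_minpoly_eq hT0 hβT, irreducible_iff_natDegree_minpoly_eq hP0 hβ,
    natDegree_minpoly_eq_finrank_mul hcop hα (IsAlgebraic.isIntegral ⟨_, hT0, hβT⟩) hβ', hT, hP, hn,
    mul_comm, Nat.mul_left_inj hn0]

end Transform

section FiniteExtension

theorem natDegree_minpoly_le_half_finrank {F K : Type*} [Field F] [Field K] [Algebra F K]
    [FiniteDimensional F K] {α : K} (hα : (minpoly F α).natDegree ≠ Module.finrank F K) :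
    (minpoly F α).natDegree ≤ Module.finrank F K / 2 := by
  obtain ⟨k, hk⟩ := minpoly.degree_dvd (IsIntegral.of_finite F α)
  have hpos : 0 < Module.finrank F K := Module.finrank_pos
  rw [Nat.le_div_iff_mul_le two_pos, hk]
  refine Nat.mul_le_mul_left _ ((Nat.two_le_iff k).mpr ⟨?_, ?_⟩)
  · rintro rfl
    exact hpos.ne' hk
  · rintro rfl
    exact hα (by rw [hk, mul_one])

variable {F K : Type*} [Field F] [Field K] [Finite K] [Algebra F K]

theorem exists_minpoly_eq {f : F[X]} (hm : f.Monic) (hi : Irreducible f)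
    (hdvd : f.natDegree ∣ Module.finrank F K) : ∃ α : K, minpoly F α = f := by
  have : Fact (Irreducible f) := ⟨hi⟩
  have hfin : Module.finrank F (AdjoinRoot f) = f.natDegree := by
    rw [(AdjoinRoot.powerBasis hi.ne_zero).finrank, AdjoinRoot.powerBasis_dim]
  obtain ⟨e⟩ := FiniteField.nonempty_algHom_of_finrank_dvd (F := F) (K := AdjoinRoot f)
    (L := K) (hfin ▸ hdvd)
  refine ⟨e (AdjoinRoot.root f), (minpoly.eq_of_irreducible_of_monic hi ?_ hm).symm⟩
  rw [aeval_algHom_apply, AdjoinRoot.aeval_eq, AdjoinRoot.mk_self, map_zero]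

variable [Finite F]

theorem ncard_minpoly_eq (α : K) :
    {a : K | minpoly F a = minpoly F α}.ncard = (minpoly F α).natDegree := by
  have : Module.Finite F K := Module.Finite.of_finite
  have hint : IsIntegral F α := IsIntegral.of_finite F α
  have hroots : {a : K | minpoly F a = minpoly F α} = (minpoly F α).rootSet K := by
    ext a
    rw [mem_rootSet_of_ne (minpoly.ne_zero hint)]
    refine ⟨fun ha => ?_, fun ha => ?_⟩
    · rw [← ha, minpoly.aeval]
    · exact (minpoly.eq_of_irreducible_of_monic (minpoly.irreducible hint) ha
        (minpoly.monic hint)).symm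
  rw [hroots, Set.ncard_eq_toFinset_card', Set.toFinset_card, card_rootSet_eq_natDegree
    (Algebra.IsSeparable.isSeparable F α) (Normal.splits inferInstance α)]

theorem card_eq_mul_ncard_of_mem_iff_minpoly_mem {𝓢 : Set F[X]} {n : ℕ}
    (hn : n ∣ Module.finrank F K) (h𝓢 : ∀ f ∈ 𝓢, f.Monic ∧ Irreducible f ∧ f.natDegree = n)
    {S : Finset K} (hS : ∀ α, α ∈ S ↔ minpoly F α ∈ 𝓢) : S.card = n * 𝓢.ncard := by
  classical
  have himage : 𝓢 = S.image (minpoly F) := by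
    ext f
    rw [Finset.mem_coe, Finset.mem_image]
    refine ⟨fun hf => ?_, ?_⟩
    · obtain ⟨hm, hi, hdeg⟩ := h𝓢 f hf
      obtain ⟨α, rfl⟩ := exists_minpoly_eq (K := K) hm hi (hdeg ▸ hn)
      exact ⟨α, (hS α).mpr hf, rfl⟩
    · rintro ⟨α, hα, rfl⟩
      exact (hS α).mp hα
  rw [himage, Set.ncard_coe_finset, Finset.card_eq_sum_card_image (minpoly F) S,
    Finset.sum_const_nat (m := n), mul_comm]
  intro f hf
  obtain ⟨α, hα, rfl⟩ := Finset.mem_image.mp hf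
  rw [← (h𝓢 _ ((hS α).mp hα)).2.2, ← ncard_minpoly_eq α, ← Set.ncard_coe_finset]
  congr 1
  ext a
  simp only [Finset.coe_filter, Set.mem_ofPred_eq, and_iff_right_iff_imp]
  intro ha
  rwa [hS, ha, ← hS]

theorem card_le_card_pow_of_natDegree_minpoly_eq {d : ℕ} {S : Finset K}
    (hS : ∀ α ∈ S, (minpoly F α).natDegree = d) : S.card ≤ Nat.card F ^ d := by
  have : Module.Finite F K := Module.Finite.of_finite
  rcases S.eq_empty_or_nonempty with rfl | ⟨α₀, hα₀⟩
  · exact Nat.zero_le _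
  have hd : d ≠ 0 := hS α₀ hα₀ ▸ (minpoly.natDegree_pos (IsIntegral.of_finite F α₀)).ne'
  have hq : 1 < Nat.card F := Finite.one_lt_card
  rw [← FiniteField.X_pow_card_pow_sub_X_natDegree_eq F hd hq]
  refine card_le_natDegree_of_aeval_eq_zero
    (FiniteField.X_pow_card_pow_sub_X_ne_zero F hd hq) fun α hα => ?_
  have hirr : Irreducible (minpoly F α) := minpoly.irreducible (IsIntegral.of_finite F α)
  exact aeval_eq_zero_of_dvd_aeval_eq_zero
    (hirr.natDegree_dvd_iff_dvd_X_pow_card_pow_sub_X.mp (hS α hα).dvd) (minpoly.aeval F α)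

theorem card_lt_card_pow_of_natDegree_minpoly_ne {S : Finset K}
    (hS : ∀ α ∈ S, (minpoly F α).natDegree ≠ Module.finrank F K) :
    S.card < Nat.card F ^ (Module.finrank F K / 2 + 1) := by
  have : Module.Finite F K := Module.Finite.of_finite
  calc S.card
      = ∑ d ∈ Finset.range (Module.finrank F K / 2 + 1),
          (S.filter fun α => (minpoly F α).natDegree = d).card :=
        Finset.card_eq_sum_card_fiberwise fun α hα => Finset.mem_coe.mpr
          (Finset.mem_range_succ_iff.mpr (natDegree_minpoly_le_half_finrank (hS α hα)))
    _ ≤ ∑ d ∈ Finset.range (Module.finrank F K / 2 + 1), Nat.card F ^ d :=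
        Finset.sum_le_sum fun d _ => card_le_card_pow_of_natDegree_minpoly_eq fun α hα =>
          (Finset.mem_filter.mp hα).2
    _ < Nat.card F ^ (Module.finrank F K / 2 + 1) :=
        Nat.geomSum_lt Finite.one_lt_card fun d hd => Finset.mem_range.mp hd

end FiniteExtension

section Main

variable {F : Type*} [Field F] {g h : F[X]}

theorem exists_abs_three_mul_card_omittedValues_sub_le [Fintype F] (hodd : Odd (ringChar F))
    (hcop : IsCoprime g h) (hdeg : max g.natDegree h.natDegree = 3) {L : Type*} [Field L]
    [Algebra F L] {P : L} (hP : aeval P (derivative g * h - g * derivative h) = 0)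
    (hP' : aeval P (derivative (derivative g * h - g * derivative h)) ≠ 0) :
    ∃ B : ℝ, ∀ (n : ℕ) (K : Type*) [Field K] [Fintype K] [DecidableEq K] [Algebra F K],
      Fintype.card K = Fintype.card F ^ n →
        |3 * ((omittedValues (g.map (algebraMap F K)) (h.map (algebraMap F K))).card : ℝ) -
          (Fintype.card F : ℝ) ^ n| ≤ B * (Fintype.card F : ℝ) ^ ((n : ℝ) / 2) := by
  have hF : ringChar F ≠ 2 := fun h2 => by simp [h2, Nat.odd_iff] at hodd
  have hcard : Odd (Fintype.card F) := Nat.odd_iff.mpr (FiniteField.odd_card_of_char_ne_two hF)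
  have h3 : g.coeff 3 ≠ 0 ∨ h.coeff 3 ≠ 0 := hdeg ▸ coeff_max_natDegree_ne_zero hcop
  have hg : g.natDegree ≤ 3 := hdeg ▸ le_max_left _ _
  have hh : h.natDegree ≤ 3 := hdeg ▸ le_max_right _ _
  have hsq := bezoutDiscr_ne_C_mul_sq (Ring.two_ne_zero hF) hcop hg hh h3 hP hP'
  have hE : exceptionalPoly g h ≠ 0 := exceptionalPoly_ne_zero h3
    (fun hD => hsq 0 0 (by rw [hD, C_0, zero_mul])) (fun hW => hP' (by simp [hW]))
  obtain ⟨B, hB⟩ := exists_abs_sum_quadraticChar_le hsq hcard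
  refine ⟨3 * (exceptionalPoly g h).natDegree + B, fun n K _ _ _ _ hK => ?_⟩
  have hKF : ringChar K = ringChar F := (Algebra.ringChar_eq F K).symm
  have hcount := abs_three_mul_card_omittedValues_sub_le (hKF ▸ hF)
    (hcop.map (mapRingHom (algebraMap F K))) (natDegree_map_le.trans hg)
    (natDegree_map_le.trans hh)
    (by simpa only [coe_mapRingHom, ← map_exceptionalPoly] using
      (Polynomial.map_ne_zero_iff (algebraMap F K).injective).mpr hE)
  simp only [coe_mapRingHom, ← map_exceptionalPoly, natDegree_map, ← map_bezoutDiscr,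
    eval_map_algebraMap, hK, Nat.cast_pow] at hcount
  have hone : 1 ≤ (Fintype.card F : ℝ) ^ ((n : ℝ) / 2) :=
    Real.one_le_rpow (Nat.one_le_cast.mpr Fintype.card_pos) (by positivity)
  have hsum := hB n K hK
  rw [add_mul]
  refine (sub_le_iff_le_add.mp (abs_sub_abs_le_abs_sub _ _)).trans (add_le_add ?_ hsum)
  exact hcount.trans (le_mul_of_one_le_right (by positivity) hone)

theorem irreducible_ratTransform_minpoly_iff_forall_aeval_ne {K : Type*} [Field K] [Algebra F K]
    [FiniteDimensional F K] (hcop : IsCoprime g h) (hdeg : max g.natDegree h.natDegree = 3)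
    (hK : 1 < Module.finrank F K) {α : K} (hα : (minpoly F α).natDegree = Module.finrank F K) :
    Irreducible (ratTransform g h (minpoly F α)) ↔ ∀ x, aeval x g ≠ α * aeval x h := by
  have hα' : α ∉ (algebraMap F K).range := by
    rintro ⟨a, rfl⟩
    rw [minpoly.eq_X_sub_C, natDegree_X_sub_C] at hα
    exact hK.ne hα
  have hfiber : (fiberPoly g h α).natDegree = 3 := (natDegree_fiberPoly hcop hα').trans hdeg
  have hne : fiberPoly g h α ≠ 0 := ne_zero_of_natDegree_gt (hfiber ▸ zero_lt_three)
  rw [irreducible_ratTransform_minpoly_iff hcop (by rw [hdeg]; exact three_ne_zero)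
      ((Field.primitive_element_iff_minpoly_natDegree_eq F α).mpr hα) hα',
    irreducible_iff_roots_eq_zero_of_degree_le_three (hfiber ▸ Nat.le_succ 2) hfiber.le,
    Multiset.eq_zero_iff_forall_notMem]
  refine forall_congr' fun x => not_congr ?_
  rw [mem_roots hne, IsRoot.def, ← coe_aeval_eq_eval, aeval_fiberPoly_eq_zero_iff,
    Algebra.algebraMap_self_apply]

variable {K : Type*} [Field K] [Fintype K] [DecidableEq K] [Algebra F K] [Finite F]

theorem card_filter_omittedValues_eq_mul_ncard_irredSet (hcop : IsCoprime g h)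
    (hdeg : max g.natDegree h.natDegree = 3) (hK : 1 < Module.finrank F K) :
    ((omittedValues (g.map (algebraMap F K)) (h.map (algebraMap F K))).filter
        fun α => (minpoly F α).natDegree = Module.finrank F K).card =
      Module.finrank F K * (IrredSet g h (Module.finrank F K)).ncard := by
  have : Module.Finite F K := Module.Finite.of_finite
  refine card_eq_mul_ncard_of_mem_iff_minpoly_mem dvd_rfl
    (fun f hf => ⟨hf.1, hf.2.1, hf.2.2.1⟩) fun α => ?_
  have hint : IsIntegral F α := IsIntegral.of_finite F α
  simp only [Finset.mem_filter, omittedValues, Finset.mem_univ, true_and, eval_map_algebraMap,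
    IrredSet, Set.mem_ofPred_eq, minpoly.monic hint, minpoly.irreducible hint]
  rw [and_comm]
  exact and_congr_right fun hα =>
    (irreducible_ratTransform_minpoly_iff_forall_aeval_ne hcop hdeg hK hα).symm

theorem abs_finrank_mul_ncard_irredSet_sub_le (hcop : IsCoprime g h)
    (hdeg : max g.natDegree h.natDegree = 3) (hK : 1 < Module.finrank F K) :
    |(Module.finrank F K : ℝ) * (IrredSet g h (Module.finrank F K)).ncard -
        (omittedValues (g.map (algebraMap F K)) (h.map (algebraMap F K))).card| ≤
      Nat.card F * (Nat.card F : ℝ) ^ ((Module.finrank F K : ℝ) / 2) := by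
  set N := omittedValues (g.map (algebraMap F K)) (h.map (algebraMap F K))
  set n := Module.finrank F K
  have hsplit := Finset.card_filter_add_card_filter_not (s := N)
    fun α => (minpoly F α).natDegree = n
  rw [card_filter_omittedValues_eq_mul_ncard_irredSet hcop hdeg hK] at hsplit
  set T := N.filter fun α => ¬ (minpoly F α).natDegree = n
  have hT : T.card < Nat.card F ^ (n / 2 + 1) :=
    card_lt_card_pow_of_natDegree_minpoly_ne fun α hα => (Finset.mem_filter.mp hα).2
  have hq : (1 : ℝ) ≤ Nat.card F := Nat.one_le_cast.mpr Nat.card_pos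
  rw [← hsplit]
  push_cast
  rw [sub_add_cancel_left, abs_neg, Nat.abs_cast]
  calc (T.card : ℝ) ≤ Nat.card F * (Nat.card F : ℝ) ^ (n / 2) := by
        rw [← pow_succ']
        exact_mod_cast hT.le
    _ ≤ Nat.card F * (Nat.card F : ℝ) ^ ((n : ℝ) / 2) := by
        rw [← Real.rpow_natCast]
        gcongr
        exact Nat.cast_div_le

end Main

theorem exists_aeval_eq_zero_and_aeval_derivative_ne_zero {F : Type*} [Field F] [PerfectField F]
    {f : F[X]} (hf : Squarefree f) (hdeg : f.natDegree ≠ 0) :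
    ∃ P : AlgebraicClosure F, aeval P f = 0 ∧ aeval P (derivative f) ≠ 0 := by
  obtain ⟨P, hP⟩ := IsAlgClosed.exists_aeval_eq_zero (AlgebraicClosure F) f
    fun h0 => hdeg (natDegree_eq_of_degree_eq_some h0)
  exact ⟨P, hP, (PerfectField.separable_iff_squarefree.mpr hf).aeval_derivative_ne_zero hP⟩

theorem stmt11_general {F : Type*} [Field F] [Fintype F] (q : ℕ) (hq : Fintype.card F = q)
    (hodd : Odd (ringChar F)) (g h : F[X]) (hcop : IsCoprime g h)
    (hdeg : max g.natDegree h.natDegree = 3) {L : Type*} [Field L] [Algebra F L] {P : L}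
    (hP : aeval P (derivative g * h - g * derivative h) = 0)
    (hP' : aeval P (derivative (derivative g * h - g * derivative h)) ≠ 0) :
    ∃ Cst : ℝ, ∀ n : ℕ, 1 < n →
      |((IrredSet g h n).ncard : ℝ) - (q : ℝ) ^ n / (3 * n)| ≤
        Cst * (q : ℝ) ^ ((n : ℝ) / 2) / n := by
  classical
  subst hq
  obtain ⟨B, hB⟩ := exists_abs_three_mul_card_omittedValues_sub_le hodd hcop hdeg hP hP'
  refine ⟨Fintype.card F + B / 3, fun n hn => ?_⟩
  have : Fact (ringChar F).Prime := ⟨CharP.char_is_prime F _⟩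
  have : NeZero n := ⟨by lia⟩
  let K := FiniteField.Extension F (ringChar F) n
  have : Fintype K := Fintype.ofFinite K
  have hcard : Fintype.card K = Fintype.card F ^ n := by
    simpa only [Nat.card_eq_fintype_card] using FiniteField.natCard_extension F (ringChar F) n
  have hrank : Module.finrank F K = n := FiniteField.finrank_extension F (ringChar F) n
  have hS := abs_finrank_mul_ncard_irredSet_sub_le (K := K) hcop hdeg (hrank.symm ▸ hn)
  have hN := hB n K hcard
  rw [hrank, Nat.card_eq_fintype_card] at hS
  have hn0 : (0 : ℝ) < n := Nat.cast_pos.mpr (by lia)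
  rw [le_div_iff₀ hn0, ← abs_of_pos hn0, ← abs_mul, abs_of_pos hn0, sub_mul,
    show (Fintype.card F : ℝ) ^ n / (3 * n) * n = (Fintype.card F : ℝ) ^ n / 3 by field_simp]
  rw [abs_le] at hS hN ⊢
  constructor <;> linarith

/-- Theorem 11: if `R = g/h` is a cubic rational expression over `F_q` of odd characteristic
with four distinct ramification points over the algebraic closure (i.e. `g'h − gh'` is
squarefree of degree `4`, or squarefree of degree `3` with `∞` as fourth ramification
point), then `|𝓘(g,h,n,q)| = q^n/(3n) + O(q^{n/2}/n)`. -/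
theorem stmt11 {F : Type*} [Field F] [Fintype F] (q : ℕ) (hq : Fintype.card F = q)
    (hodd : Odd (ringChar F))
    (g h : F[X]) (hcop : IsCoprime g h) (hdeg : max g.natDegree h.natDegree = 3)
    (hsq : Squarefree (derivative g * h - g * derivative h))
    (hram : (derivative g * h - g * derivative h).natDegree = 4 ∨
            (derivative g * h - g * derivative h).natDegree = 3) :
    ∃ Cst : ℝ, ∀ n : ℕ, 1 < n →
      |((IrredSet g h n).ncard : ℝ) - (q : ℝ) ^ n / (3 * n)| ≤
        Cst * (q : ℝ) ^ ((n : ℝ) / 2) / n := by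
  obtain ⟨P, hP, hP'⟩ := exists_aeval_eq_zero_and_aeval_derivative_ne_zero hsq (by lia)
  exact stmt11_general q hq hodd g h hcop hdeg hP hP'
end

section
/- Let F_q be a finite field of characteristic three and let n > 1 be an integer. Then |𝓘(x^3 + x^2, 1, n, q)| = (1/(3 n_3)) I(n/n_3, q^{n_3}). -/
open Polynomial

/-- `I(n,q) = (1/n) ∑_{d ∣ n} μ(d) q^{n/d}`, used formally for any rational `q`. -/
noncomputable def Ifun (n : ℕ) (q : ℚ) : ℚ :=
  (1 / (n : ℚ)) * ∑ d ∈ n.divisors, ((ArithmeticFunction.moebius d : ℤ) : ℚ) * q ^ (n / d)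

/-- `I(n/m, q)` with the convention that it is `0` when `m` does not divide `n`
(i.e. when `n/m` is not a positive integer). -/
noncomputable def IfunD (n m : ℕ) (q : ℚ) : ℚ := if m ∣ n then Ifun (n / m) q else 0

/-- `n₃`: the largest power of `3` dividing `n`. -/
def nThree (n : ℕ) : ℕ := 3 ^ (n.factorization 3)

/-!
Let `g = X ^ p + X ^ (p - 1)`, let `z` be algebraic over `F`, a field with `q` elements of
characteristic `p`, and put `u = z ^ p - z`. Then `g (z ^ (p - 1) - 1) = u ^ (p - 1)`. By
Artin–Schreier theory `z` has degree `1` or `p` over `F(u)`, and degree `p` occurs exactly when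
`f ∘ g` is irreducible for `f` the minimal polynomial of `u ^ (p - 1)`. In this case
`deg f = deg u`, and `f` arises in this way from exactly `p * (p - 1) * deg f` elements `z`.

With `φ` the `q`-power Frobenius, the solutions of `(φ ^ n z - z) ^ (p - 1) = 1`, of which there are
`(p - 1) * q ^ n`, are the `z` of degree `p` over `F(u)` for which `k = deg u` divides `n` and
`n / k` is prime to `p`. If `n = p ^ a * m` with `m` prime to `p`, these `k` are the numbers
`p ^ a * v` with `v ∣ m`, so Möbius inversion over the divisors of `m` counts the `z` with
`deg u = n`.
-/

open IntermediateField

section Counting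

variable {α β : Type*}

theorem ncard_eq_sum_ncard_fiberwise {s : Set α} (hs : s.Finite) {f : α → β} {t : Finset β}
    (h : Set.MapsTo f s t) : s.ncard = ∑ b ∈ t, {a ∈ s | f a = b}.ncard := by
  classical
  lift s to Finset α using hs
  rw [Set.ncard_coe_finset, Finset.card_eq_sum_card_fiberwise h]
  refine Finset.sum_congr rfl fun b _ => ?_
  rw [← Set.ncard_coe_finset, Finset.coe_filter]
  rfl

theorem ncard_preimage_eq_mul_ncard {f : α → β} {t : Set β} (hs : (f ⁻¹' t).Finite) {k : ℕ}
    (hk : k ≠ 0) (hfiber : ∀ b ∈ t, (f ⁻¹' {b}).ncard = k) :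
    (f ⁻¹' t).ncard = k * t.ncard := by
  have ht : t.Finite := (hs.image f).subset fun b hb => by
    obtain ⟨a, rfl⟩ := Set.nonempty_of_ncard_ne_zero ((hfiber b hb).trans_ne hk)
    exact Set.mem_image_of_mem f hb
  lift t to Finset β using ht
  rw [ncard_eq_sum_ncard_fiberwise hs (Set.mapsTo_preimage f t), Set.ncard_coe_finset,
    Finset.sum_const_nat (m := k) fun b hb => ?_, mul_comm]
  rw [← hfiber b hb]
  congr 1
  ext a
  exact and_iff_right_of_imp fun h : f a = b => show f a ∈ (t : Set β) from h ▸ hb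

end Counting

section Divisors

theorem eq_or_eq_mul_of_dvd_of_dvd_mul {p a b : ℕ} (hp : p.Prime) (ha : 0 < a) (hab : a ∣ b)
    (hba : b ∣ p * a) : b = a ∨ b = p * a := by
  obtain ⟨e, rfl⟩ := hab
  rw [mul_comm p] at hba
  obtain rfl | rfl := (Nat.dvd_prime hp).1 (Nat.dvd_of_mul_dvd_mul_left ha hba)
  · exact Or.inl (mul_one a)
  · exact Or.inr (mul_comm a e)

theorem image_mul_divisors_eq_filter {p m : ℕ} (hp : p.Prime) (hm : ¬ p ∣ m) (a : ℕ) :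
    m.divisors.image (p ^ a * ·) = {k ∈ (p ^ a * m).divisors | ¬ p ∣ p ^ a * m / k} := by
  have hm0 : m ≠ 0 := fun h => hm (h ▸ dvd_zero p)
  have hpa : p ^ a ≠ 0 := pow_ne_zero a hp.ne_zero
  ext k
  simp only [Finset.mem_image, Finset.mem_filter, Nat.mem_divisors]
  constructor
  · rintro ⟨v, ⟨hv, -⟩, rfl⟩
    refine ⟨⟨mul_dvd_mul_left _ hv, mul_ne_zero hpa hm0⟩, ?_⟩
    rw [Nat.mul_div_mul_left _ _ (Nat.pos_of_ne_zero hpa)]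
    exact fun h => hm (h.trans (Nat.div_dvd_of_dvd hv))
  · rintro ⟨⟨hk, -⟩, hpk⟩
    have hcop : Nat.Coprime (p ^ a) (p ^ a * m / k) :=
      Nat.Coprime.pow_left a ((hp.coprime_iff_not_dvd).2 hpk)
    obtain ⟨v, rfl⟩ : p ^ a ∣ k :=
      hcop.dvd_of_dvd_mul_right (by rw [Nat.mul_div_cancel' hk]; exact dvd_mul_right _ _)
    exact ⟨v, ⟨Nat.dvd_of_mul_dvd_mul_left (Nat.pos_of_ne_zero hpa) hk, hm0⟩, rfl⟩

theorem eq_mul_Ifun_of_sum_divisors_eq {f : ℕ → ℚ} {c Q : ℚ} {s : Set ℕ}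
    (hs : ∀ m n, m ∣ n → n ∈ s → m ∈ s)
    (hf : ∀ n > 0, n ∈ s → ∑ d ∈ n.divisors, f d = c * Q ^ n) {n : ℕ} (hn : 0 < n)
    (hns : n ∈ s) : f n = c * (n * Ifun n Q) := by
  have hmoebius := (ArithmeticFunction.sum_eq_iff_sum_mul_moebius_eq_on s hs).1 hf n hn hns
  rw [← hmoebius, Ifun, ← mul_assoc (n : ℚ), mul_one_div_cancel (Nat.cast_ne_zero.2 hn.ne'),
    one_mul, Finset.mul_sum, Nat.sum_divisorsAntidiagonal
      (f := fun d e => ((ArithmeticFunction.moebius d : ℤ) : ℚ) * (c * Q ^ e))]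
  exact Finset.sum_congr rfl fun d _ => mul_left_comm _ _ _

end Divisors

section PowSubSelf

variable {R : Type*} [CommRing R]

theorem mul_pow_sub_one_sub_one (z : R) {p : ℕ} (hp : p ≠ 0) :
    z * (z ^ (p - 1) - 1) = z ^ p - z := by
  rw [mul_sub_one, mul_pow_sub_one hp]

theorem pow_add_pow_sub_one_of_pow_sub_one_sub_one (z : R) {p : ℕ}
    (hp : p ≠ 0) :
    (z ^ (p - 1) - 1) ^ p + (z ^ (p - 1) - 1) ^ (p - 1) = (z ^ p - z) ^ (p - 1) := by
  rw [← mul_pow_sub_one_sub_one z hp, mul_pow, ← pow_sub_one_mul hp (z ^ (p - 1) - 1)]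
  ring

theorem exists_pow_eq_self_and_eq_mul_of_pow_sub_one_eq {K : Type*} [Field K] {p : ℕ}
    (hp : p ≠ 0) {x y : K} (hy : y ≠ 0) (h : x ^ (p - 1) = y ^ (p - 1)) :
    ∃ ζ : K, ζ ^ p = ζ ∧ x = ζ * y := by
  refine ⟨x / y, ?_, (div_mul_cancel₀ x hy).symm⟩
  rw [← pow_sub_one_mul hp, div_pow, h, div_self (pow_ne_zero _ hy), one_mul]

theorem natDegree_X_pow_add_X_pow_sub_one [Nontrivial R] {p : ℕ} (hp : p ≠ 0) :
    (X ^ p + X ^ (p - 1) : R[X]).natDegree = p := by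
  rw [natDegree_add_eq_left_of_natDegree_lt, natDegree_X_pow]
  simpa only [natDegree_X_pow] using Nat.sub_one_lt hp

theorem monic_X_pow_add_X_pow_sub_one {p : ℕ} (hp : p ≠ 0) :
    (X ^ p + X ^ (p - 1) : R[X]).Monic :=
  monic_X_pow_add ((degree_X_pow_le _).trans_lt (by exact_mod_cast Nat.sub_one_lt hp))

variable {p : ℕ} [Fact p.Prime] [CharP R p]

theorem pow_char_eq_self_of_pow_char_sub_eq_mul {x y ζ : R} (hζ : ζ ^ p = ζ)
    (h : x ^ p - x = ζ * (y ^ p - y)) : (x - ζ * y) ^ p = x - ζ * y := by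
  rw [sub_pow_char, mul_pow, hζ]
  linear_combination h

theorem derivative_pow_char_sub_one_of_derivative_eq_neg_one {L : R[X]}
    (hL : derivative L = -1) : derivative (L ^ (p - 1)) = L ^ (p - 2) := by
  have hp : ((p - 1 : ℕ) : R[X]) = -1 := by
    rw [Nat.cast_sub (Fact.out : p.Prime).one_le, CharP.cast_eq_zero, Nat.cast_one, zero_sub]
  rw [derivative_pow, hL, map_natCast, hp, Nat.sub_sub]
  ring

end PowSubSelf

section Degree

/-- The degree of `x` over `F`, that is, the degree of its minimal polynomial. -/
noncomputable def degreeOver (F : Type*) {K : Type*} [Field F] [Field K] [Algebra F K]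
    (x : K) : ℕ :=
  (minpoly F x).natDegree

variable {F K : Type*} [Field F] [Field K] [Algebra F K]

theorem ratTransform_one_eq_comp (g f : F[X]) : ratTransform g 1 f = f.comp g := by
  simp only [ratTransform, one_pow, mul_one, comp, eval₂_eq_sum_range]

theorem degreeOver_dvd_of_mem_adjoin {x y : K} (hx : IsIntegral F x)
    (hy : y ∈ F⟮x⟯) : degreeOver F y ∣ degreeOver F x := by
  have := IntermediateField.adjoin.finiteDimensional hx
  have hdvd : degreeOver F (⟨y, hy⟩ : F⟮x⟯) ∣ Module.finrank F F⟮x⟯ :=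
    minpoly.degree_dvd (Algebra.IsIntegral.isIntegral _)
  rwa [IntermediateField.adjoin.finrank hx, degreeOver,
    ← minpoly.algebraMap_eq (algebraMap F⟮x⟯ K).injective] at hdvd

theorem minpoly_dvd_minpoly_aeval_comp (g : F[X]) (x : K) :
    minpoly F x ∣ (minpoly F (aeval x g)).comp g :=
  minpoly.dvd F x (by rw [aeval_comp, minpoly.aeval])

theorem ncard_rootSet_of_aeval_derivative_ne_zero [IsAlgClosed K] {f : F[X]}
    (hf : ∀ x : K, aeval x f = 0 → aeval x (derivative f) ≠ 0) :
    (f.rootSet K).ncard = f.natDegree := by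
  classical
  have hsep : f.Separable := (isCoprime_iff_aeval_ne_zero_of_isAlgClosed F K f _).2
    fun x => not_or_of_imp (hf x)
  rw [← Nat.card_coe_set_eq, Nat.card_eq_fintype_card,
    card_rootSet_eq_natDegree hsep (IsAlgClosed.splits _)]

variable [Algebra.IsAlgebraic F K]

theorem degreeOver_pos (x : K) : 0 < degreeOver F x :=
  minpoly.natDegree_pos (Algebra.IsIntegral.isIntegral x)

theorem degreeOver_dvd_of_aeval_eq (g : F[X]) {x y : K} (h : aeval x g = y) :
    degreeOver F y ∣ degreeOver F x := by
  refine degreeOver_dvd_of_mem_adjoin (Algebra.IsIntegral.isIntegral x) ?_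
  rw [← h]
  exact algebra_adjoin_le_adjoin F {x} (aeval_mem_adjoin_singleton F x)

theorem degreeOver_pow_sub_self_dvd (m : ℕ) (x : K) :
    degreeOver F (x ^ m - x) ∣ degreeOver F x :=
  degreeOver_dvd_of_aeval_eq (X ^ m - X) (by simp)

theorem not_degreeOver_dvd {m : ℕ} {x : K}
    (hx : degreeOver F x ≠ degreeOver F (x ^ m - x)) :
    ¬ degreeOver F x ∣ degreeOver F (x ^ m - x) :=
  fun h => hx (h.antisymm (degreeOver_pow_sub_self_dvd m x))

theorem degreeOver_dvd_pow_sub_one_sub_one {m : ℕ} (hm : m ≠ 0) (x : K) :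
    degreeOver F ((x ^ m - x) ^ (m - 1)) ∣ degreeOver F (x ^ (m - 1) - 1) :=
  degreeOver_dvd_of_aeval_eq (X ^ m + X ^ (m - 1))
    (by simp [pow_add_pow_sub_one_of_pow_sub_one_sub_one x hm])

theorem degreeOver_le_of_aeval_eq {g : F[X]} (hg : g.Monic) (hg' : g.natDegree ≠ 0) {x y : K}
    (h : aeval x g = y) : degreeOver F x ≤ g.natDegree * degreeOver F y := by
  have hcomp := (minpoly.monic (Algebra.IsIntegral.isIntegral (R := F) y)).comp hg hg'
  rw [mul_comm, degreeOver, degreeOver, ← natDegree_comp]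
  subst h
  exact natDegree_le_of_dvd (minpoly_dvd_minpoly_aeval_comp g x) hcomp.ne_zero

theorem irreducible_minpoly_aeval_comp_iff {g : F[X]} (hg : g.Monic) (hg' : g.natDegree ≠ 0)
    (x : K) :
    Irreducible ((minpoly F (aeval x g)).comp g) ↔
      degreeOver F x = g.natDegree * degreeOver F (aeval x g) := by
  have hx : IsIntegral F x := Algebra.IsIntegral.isIntegral x
  have hcomp := (minpoly.monic (Algebra.IsIntegral.isIntegral (R := F) (aeval x g))).comp hg hg'
  rw [mul_comm, degreeOver, degreeOver, ← natDegree_comp]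
  refine ⟨fun h => ?_, fun h => ?_⟩
  · rw [← minpoly.eq_of_irreducible_of_monic h (by rw [aeval_comp, minpoly.aeval]) hcomp]
  · rw [eq_of_monic_of_dvd_of_natDegree_le (minpoly.monic hx) hcomp
      (minpoly_dvd_minpoly_aeval_comp g x) h.ge]
    exact minpoly.irreducible hx

end Degree

section Frobenius

variable {F K : Type*} [Field F] [Field K] [Algebra F K]

local notation "φ" => FiniteField.frobeniusAlgHom F K

section PowCard

variable [Fintype F]

theorem frobenius_pow_apply (k : ℕ) (x : K) : (φ ^ k) x = x ^ Fintype.card F ^ k := by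
  rw [AlgHom.coe_pow, FiniteField.coe_frobeniusAlgHom, pow_iterate]

theorem frobenius_pow_comm (i j : ℕ) (x : K) : (φ ^ i) ((φ ^ j) x) = (φ ^ j) ((φ ^ i) x) := by
  rw [← AlgHom.mul_apply, ← AlgHom.mul_apply, ← pow_add, ← pow_add, add_comm]

theorem degreeOver_dvd_iff_frobenius [Algebra.IsAlgebraic F K] {k : ℕ} {x : K} :
    degreeOver F x ∣ k ↔ (φ ^ k) x = x := by
  rw [degreeOver, (minpoly.irreducible
    (Algebra.IsIntegral.isIntegral x)).natDegree_dvd_iff_dvd_X_pow_card_pow_sub_X, minpoly.dvd_iff,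
    map_sub, map_pow, aeval_X, sub_eq_zero, frobenius_pow_apply, Nat.card_eq_fintype_card]

variable {p : ℕ} [CharP F p]

theorem frobenius_pow_apply_eq_self_of_pow_char_eq_self {x : K} (hx : x ^ p = x) (k : ℕ) :
    (φ ^ k) x = x := by
  obtain ⟨r, -, hr⟩ := FiniteField.card F p
  rw [frobenius_pow_apply, hr, ← pow_mul]
  simpa only [pow_iterate] using Function.iterate_fixed (f := (· ^ p)) hx (r * k)

variable [Fact p.Prime] [Algebra.IsAlgebraic F K]

theorem pow_char_frobenius_sub_eq_iff {k : ℕ} {z : K} :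
    ((φ ^ k) z - z) ^ p = (φ ^ k) z - z ↔ degreeOver F (z ^ p - z) ∣ k := by
  have : CharP K p := charP_of_injective_algebraMap' F p
  rw [degreeOver_dvd_iff_frobenius, map_sub, map_pow, sub_pow_char,
    sub_eq_sub_iff_sub_eq_sub]

theorem frobenius_pow_mul_apply {k : ℕ} {z : K} (hz : degreeOver F (z ^ p - z) ∣ k) (j : ℕ) :
    (φ ^ (k * j)) z = z + j * ((φ ^ k) z - z) := by
  have hfix := frobenius_pow_apply_eq_self_of_pow_char_eq_self (F := F)
    (pow_char_frobenius_sub_eq_iff.2 hz) k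
  induction j with
  | zero => simp
  | succ j ih =>
    rw [mul_add_one, add_comm, pow_add, AlgHom.mul_apply, ih, map_add, map_mul, map_natCast, hfix]
    push_cast
    ring

end PowCard

variable [Algebra.IsAlgebraic F K]

section Finite

variable [Finite F]

theorem degreeOver_dvd_of_dvd_of_mul_dvd {k : ℕ} {x y : K}
    (hy : y ≠ 0) (hyk : degreeOver F y ∣ k) (hxyk : degreeOver F (x * y) ∣ k) :
    degreeOver F x ∣ k := by
  have := Fintype.ofFinite F
  rw [degreeOver_dvd_iff_frobenius] at *
  rwa [map_mul, hyk, mul_left_inj' hy] at hxyk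

variable {p : ℕ} [CharP F p]

theorem pow_char_sub_self_ne_zero {z : K} (hz : degreeOver F z ≠ degreeOver F (z ^ p - z)) :
    z ^ p - z ≠ 0 := by
  have := Fintype.ofFinite F
  refine fun h => not_degreeOver_dvd hz (degreeOver_dvd_iff_frobenius.2 ?_)
  exact frobenius_pow_apply_eq_self_of_pow_char_eq_self (sub_eq_zero.1 h) _

variable [Fact p.Prime]

theorem degreeOver_dvd_char_mul (z : K) :
    degreeOver F z ∣ p * degreeOver F (z ^ p - z) := by
  have := Fintype.ofFinite F
  have : CharP K p := charP_of_injective_algebraMap' F p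
  rw [degreeOver_dvd_iff_frobenius, mul_comm, frobenius_pow_mul_apply dvd_rfl,
    CharP.cast_eq_zero, zero_mul, add_zero]

theorem degreeOver_eq_char_mul_of_ne {z : K} (hz : degreeOver F z ≠ degreeOver F (z ^ p - z)) :
    degreeOver F z = p * degreeOver F (z ^ p - z) :=
  (eq_or_eq_mul_of_dvd_of_dvd_mul Fact.out (degreeOver_pos _)
    (degreeOver_pow_sub_self_dvd p z) (degreeOver_dvd_char_mul z)).resolve_left hz

theorem degreeOver_pow_char_sub_pow_sub_one {z : K}
    (hz : degreeOver F z ≠ degreeOver F (z ^ p - z)) :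
    degreeOver F ((z ^ p - z) ^ (p - 1)) = degreeOver F (z ^ p - z) := by
  have := Fintype.ofFinite F
  have : CharP K p := charP_of_injective_algebraMap' F p
  refine Nat.dvd_antisymm (degreeOver_dvd_of_aeval_eq (X ^ (p - 1)) (by simp)) ?_
  set i := degreeOver F (z ^ p - z) with hi
  set j := degreeOver F ((z ^ p - z) ^ (p - 1))
  obtain ⟨ζ, hζp, hζ⟩ : ∃ ζ, ζ ^ p = ζ ∧ (φ ^ j) (z ^ p - z) = ζ * (z ^ p - z) := by
    refine exists_pow_eq_self_and_eq_mul_of_pow_sub_one_eq (Fact.out : p.Prime).ne_zero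
      (pow_char_sub_self_ne_zero hz) ?_
    rw [← map_pow]
    exact degreeOver_dvd_iff_frobenius.1 dvd_rfl
  have hr : ((φ ^ j) z - ζ * z) ^ p = (φ ^ j) z - ζ * z :=
    pow_char_eq_self_of_pow_char_sub_eq_mul hζp (by rw [← map_pow, ← map_sub, hζ])
  have hs : ((φ ^ i) z - z) ^ p = (φ ^ i) z - z := pow_char_frobenius_sub_eq_iff.2 hi.symm.dvd
  have hs0 : (φ ^ i) z - z ≠ 0 := by
    rw [sub_ne_zero, Ne, ← degreeOver_dvd_iff_frobenius]
    exact not_degreeOver_dvd hz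
  -- `φ ^ i` acts on `z` as `z + s` and `φ ^ j` as `ζ * z + r`; these affine maps commute only if
  -- `ζ * s = s`.
  have hφs := frobenius_pow_apply_eq_self_of_pow_char_eq_self (F := F) hs j
  have hφr := frobenius_pow_apply_eq_self_of_pow_char_eq_self (F := F) hr i
  have hφζ := frobenius_pow_apply_eq_self_of_pow_char_eq_self (F := F) hζp i
  rw [map_sub] at hφs
  rw [map_sub, map_mul, hφζ, frobenius_pow_comm] at hφr
  have hζ1 : ζ = 1 := by
    have : (ζ - 1) * ((φ ^ i) z - z) = 0 := by linear_combination hφs - hφr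
    exact sub_eq_zero.1 ((mul_eq_zero.1 this).resolve_right hs0)
  rw [hi, degreeOver_dvd_iff_frobenius, hζ, hζ1, one_mul]

theorem degreeOver_pow_sub_one_sub_one_eq {z : K}
    (hz : degreeOver F z ≠ degreeOver F (z ^ p - z)) :
    degreeOver F (z ^ (p - 1) - 1) = p * degreeOver F ((z ^ p - z) ^ (p - 1)) := by
  have hp : p.Prime := Fact.out
  have hbz : degreeOver F (z ^ (p - 1) - 1) ∣ p * degreeOver F ((z ^ p - z) ^ (p - 1)) := by
    rw [degreeOver_pow_char_sub_pow_sub_one hz, ← degreeOver_eq_char_mul_of_ne hz]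
    exact degreeOver_dvd_of_aeval_eq (X ^ (p - 1) - 1) (by simp)
  refine (eq_or_eq_mul_of_dvd_of_dvd_mul hp (degreeOver_pos _)
    (degreeOver_dvd_pow_sub_one_sub_one hp.ne_zero z) hbz).resolve_left fun hb => ?_
  rw [degreeOver_pow_char_sub_pow_sub_one hz] at hb
  have hmul := mul_pow_sub_one_sub_one z hp.ne_zero
  refine not_degreeOver_dvd hz (degreeOver_dvd_of_dvd_of_mul_dvd ?_ hb.dvd (by rw [hmul]))
  exact right_ne_zero_of_mul (hmul.trans_ne (pow_char_sub_self_ne_zero hz))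

theorem degreeOver_ne_degreeOver_pow_char_sub_iff (z : K) :
    degreeOver F z ≠ degreeOver F (z ^ p - z) ↔
      degreeOver F (z ^ (p - 1) - 1) = p * degreeOver F ((z ^ p - z) ^ (p - 1)) := by
  refine ⟨degreeOver_pow_sub_one_sub_one_eq, fun hb => ne_of_gt ?_⟩
  have hp : p.Prime := Fact.out
  calc degreeOver F (z ^ p - z)
      ≤ (X ^ (p - 1) : F[X]).natDegree * degreeOver F ((z ^ p - z) ^ (p - 1)) :=
        degreeOver_le_of_aeval_eq (monic_X_pow (p - 1))
          (by rw [natDegree_X_pow]; exact (Nat.sub_pos_of_lt hp.one_lt).ne') (aeval_X_pow _)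
    _ < p * degreeOver F ((z ^ p - z) ^ (p - 1)) := by
        rw [natDegree_X_pow]
        exact Nat.mul_lt_mul_of_pos_right (Nat.sub_one_lt hp.ne_zero) (degreeOver_pos _)
    _ = degreeOver F (z ^ (p - 1) - 1) := hb.symm
    _ ≤ degreeOver F z := Nat.le_of_dvd (degreeOver_pos z)
        (degreeOver_dvd_of_aeval_eq (X ^ (p - 1) - 1) (by simp))

end Finite

variable [Fintype F] {p : ℕ} [CharP F p] [Fact p.Prime]

theorem frobenius_sub_pow_eq_one_iff {n : ℕ} {z : K} :
    ((φ ^ n) z - z) ^ (p - 1) = 1 ↔ degreeOver F z ≠ degreeOver F (z ^ p - z) ∧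
      degreeOver F (z ^ p - z) ∣ n ∧ ¬ p ∣ n / degreeOver F (z ^ p - z) := by
  have hp : p.Prime := Fact.out
  have hpow : ((φ ^ n) z - z) ^ (p - 1) = 1 ↔
      ¬ degreeOver F z ∣ n ∧ degreeOver F (z ^ p - z) ∣ n := by
    rw [degreeOver_dvd_iff_frobenius, ← sub_eq_zero (b := z),
      ← pow_char_frobenius_sub_eq_iff, ← pow_sub_one_mul hp.ne_zero]
    refine ⟨fun h => ⟨fun h0 => ?_, by rw [h, one_mul]⟩, fun h => (mul_eq_right₀ h.1).1 h.2⟩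
    rw [h0, zero_pow (Nat.sub_pos_of_lt hp.one_lt).ne'] at h
    exact zero_ne_one h
  rw [hpow, and_comm, and_left_comm]
  refine and_congr_right ?_
  rintro ⟨e, he⟩
  have hpos := degreeOver_pos (F := F) (z ^ p - z)
  rw [he, Nat.mul_div_cancel_left _ hpos]
  by_cases hz : degreeOver F z = degreeOver F (z ^ p - z)
  · simp only [hz, dvd_mul_right, not_true_eq_false, ne_eq, false_and]
  · rw [and_iff_right hz, degreeOver_eq_char_mul_of_ne hz, mul_comm p,
      Nat.mul_dvd_mul_iff_left hpos]

variable [IsAlgClosed K]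

theorem ncard_setOf_frobenius_sub_pow_eq_one {n : ℕ} (hn : n ≠ 0) :
    {z : K | ((φ ^ n) z - z) ^ (p - 1) = 1}.ncard = (p - 1) * Fintype.card F ^ n := by
  have hp : p.Prime := Fact.out
  have hL : derivative (X ^ Fintype.card F ^ n - X : F[X]) = -1 := by
    simp [derivative_X_pow, hn]
  have hdeg : ((X ^ Fintype.card F ^ n - X) ^ (p - 1) - C 1 : F[X]).natDegree =
      (p - 1) * Fintype.card F ^ n := by
    rw [natDegree_sub_C, natDegree_pow,
      FiniteField.X_pow_card_pow_sub_X_natDegree_eq F hn Fintype.one_lt_card]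
  have hne : ((X ^ Fintype.card F ^ n - X) ^ (p - 1) - C 1 : F[X]) ≠ 0 := by
    refine ne_zero_of_natDegree_gt (n := 0) ?_
    rw [hdeg]
    exact Nat.mul_pos (Nat.sub_pos_of_lt hp.one_lt) (pow_pos Fintype.card_pos n)
  have hroots : {z : K | ((φ ^ n) z - z) ^ (p - 1) = 1} =
      ((X ^ Fintype.card F ^ n - X) ^ (p - 1) - C 1 : F[X]).rootSet K := by
    ext z
    rw [Set.mem_ofPred_eq, mem_rootSet_of_ne hne, frobenius_pow_apply]
    simp [sub_eq_zero]
  rw [hroots, ncard_rootSet_of_aeval_derivative_ne_zero fun z hz => ?_, hdeg]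
  rw [derivative_sub, derivative_C, sub_zero,
    derivative_pow_char_sub_one_of_derivative_eq_neg_one hL, map_pow]
  refine pow_ne_zero _ fun h0 => ?_
  rw [map_sub, map_pow, h0, zero_pow (Nat.sub_pos_of_lt hp.one_lt).ne'] at hz
  simp at hz

theorem finite_setOf_frobenius_sub_pow_eq_one {n : ℕ} (hn : n ≠ 0) :
    {z : K | ((φ ^ n) z - z) ^ (p - 1) = 1}.Finite := by
  refine Set.finite_of_ncard_pos ?_
  rw [ncard_setOf_frobenius_sub_pow_eq_one hn]
  exact Nat.mul_pos (Nat.sub_pos_of_lt (Fact.out : p.Prime).one_lt) (pow_pos Fintype.card_pos n)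

end Frobenius

section ArtinSchreier

variable {F K : Type*} [Field F] [Field K] [Algebra F K]

/-- The elements `z` which generate a proper, hence degree `p`, Artin–Schreier extension of
`F⟮z ^ p - z⟯`, where `z ^ p - z` has degree `n` over `F`. For `F` finite, degrees determine
subextensions, so it is enough to compare the degrees of `z` and `z ^ p - z`. -/
def artinSchreierGenerators (F K : Type*) [Field F] [Field K] [Algebra F K] (p n : ℕ) : Set K :=
  {z | degreeOver F z ≠ degreeOver F (z ^ p - z) ∧ degreeOver F (z ^ p - z) = n}

/-- The minimal polynomial of `(z ^ p - z) ^ (p - 1)`, which is the value of the polynomial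
`X ^ p + X ^ (p - 1)` at `z ^ (p - 1) - 1`. -/
noncomputable def artinSchreierMinpoly (F : Type*) {K : Type*} [Field F] [Field K] [Algebra F K]
    (p : ℕ) (z : K) : F[X] :=
  minpoly F ((z ^ p - z) ^ (p - 1))

theorem artinSchreierMinpoly_eq_iff {p : ℕ} {f : F[X]} (hf : f.Monic) (hf' : Irreducible f)
    {z : K} :
    artinSchreierMinpoly F p z = f ↔ aeval z (f.comp ((X ^ p - X) ^ (p - 1))) = 0 := by
  have hG : aeval z ((X ^ p - X) ^ (p - 1) : F[X]) = (z ^ p - z) ^ (p - 1) := by simp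
  rw [aeval_comp, hG, artinSchreierMinpoly]
  refine ⟨?_, fun h => (minpoly.eq_of_irreducible_of_monic hf' h hf).symm⟩
  rintro rfl
  exact minpoly.aeval F _

variable [Algebra.IsAlgebraic F K] {p : ℕ} [Fact p.Prime] [CharP F p]

section Finite

variable [Finite F]

theorem irreducible_ratTransform_artinSchreierMinpoly_iff (z : K) :
    Irreducible (ratTransform (X ^ p + X ^ (p - 1)) 1 (artinSchreierMinpoly F p z)) ↔
      degreeOver F z ≠ degreeOver F (z ^ p - z) := by
  have hp : p ≠ 0 := (Fact.out : p.Prime).ne_zero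
  have hb : aeval (z ^ (p - 1) - 1) (X ^ p + X ^ (p - 1) : F[X]) = (z ^ p - z) ^ (p - 1) := by
    simp [pow_add_pow_sub_one_of_pow_sub_one_sub_one z hp]
  have hdeg := natDegree_X_pow_add_X_pow_sub_one (R := F) hp
  rw [ratTransform_one_eq_comp, artinSchreierMinpoly, ← hb, irreducible_minpoly_aeval_comp_iff
    (monic_X_pow_add_X_pow_sub_one hp) (by rwa [hdeg]), hb, hdeg,
    degreeOver_ne_degreeOver_pow_char_sub_iff]

theorem artinSchreierMinpoly_mem_irredSet_iff {n : ℕ} {z : K} :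
    artinSchreierMinpoly F p z ∈ IrredSet (X ^ p + X ^ (p - 1)) 1 n ↔
      z ∈ artinSchreierGenerators F K p n := by
  have hint : IsIntegral F ((z ^ p - z) ^ (p - 1)) := Algebra.IsIntegral.isIntegral _
  rw [IrredSet, Set.mem_ofPred_eq, irreducible_ratTransform_artinSchreierMinpoly_iff,
    artinSchreierMinpoly, and_iff_right (minpoly.monic hint),
    and_iff_right (minpoly.irreducible hint), and_comm]
  refine and_congr_right fun hz => ?_
  rw [← degreeOver_pow_char_sub_pow_sub_one hz, degreeOver]

variable [IsAlgClosed K]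

theorem ncard_artinSchreierMinpoly_preimage_singleton {n : ℕ} {f : F[X]}
    (hf : f ∈ IrredSet (X ^ p + X ^ (p - 1)) 1 n) :
    (artinSchreierMinpoly F (K := K) p ⁻¹' {f}).ncard = p * (p - 1) * n := by
  have hp : p.Prime := Fact.out
  obtain ⟨hmonic, hirr, hn, -⟩ := id hf
  have hL : derivative (X ^ p - X : F[X]) = -1 := by simp [derivative_X_pow, CharP.cast_eq_zero]
  have hdeg : (f.comp ((X ^ p - X) ^ (p - 1))).natDegree = p * (p - 1) * n := by
    rw [natDegree_comp, natDegree_pow, FiniteField.X_pow_card_sub_X_natDegree_eq F hp.one_lt, hn]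
    ring
  have hne : f.comp ((X ^ p - X) ^ (p - 1)) ≠ 0 := by
    refine ne_zero_of_natDegree_gt (n := 0) ?_
    rw [hdeg, ← hn]
    exact Nat.mul_pos (Nat.mul_pos hp.pos (Nat.sub_pos_of_lt hp.one_lt)) hirr.natDegree_pos
  have hfiber : artinSchreierMinpoly F (K := K) p ⁻¹' {f} =
      (f.comp ((X ^ p - X) ^ (p - 1))).rootSet K := by
    ext z
    rw [Set.mem_preimage, Set.mem_singleton_iff, artinSchreierMinpoly_eq_iff hmonic hirr,
      mem_rootSet_of_ne hne]
  rw [hfiber, ncard_rootSet_of_aeval_derivative_ne_zero fun z hz => ?_, hdeg]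
  have hsep := (PerfectField.separable_of_irreducible hirr).aeval_derivative_ne_zero
    (x := aeval z ((X ^ p - X) ^ (p - 1) : F[X])) (by rwa [← aeval_comp])
  rw [← (artinSchreierMinpoly_eq_iff hmonic hirr).2 hz,
    artinSchreierMinpoly_mem_irredSet_iff] at hf
  rw [derivative_comp, derivative_pow_char_sub_one_of_derivative_eq_neg_one hL, map_mul,
    aeval_comp]
  refine mul_ne_zero ?_ hsep
  simpa using pow_ne_zero (p - 2) (pow_char_sub_self_ne_zero hf.1)

theorem finite_artinSchreierGenerators {n : ℕ} (hn : n ≠ 0) :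
    (artinSchreierGenerators F K p n).Finite := by
  have := Fintype.ofFinite F
  refine (finite_setOf_frobenius_sub_pow_eq_one (F := F) (p := p) hn).subset ?_
  rintro z ⟨hz, rfl⟩
  refine frobenius_sub_pow_eq_one_iff.2 ⟨hz, dvd_rfl, ?_⟩
  rw [Nat.div_self (degreeOver_pos _)]
  exact (Fact.out : p.Prime).one_lt.not_ge ∘ Nat.le_of_dvd one_pos

theorem ncard_artinSchreierGenerators_eq_mul_ncard_irredSet {n : ℕ} (hn : n ≠ 0) :
    (artinSchreierGenerators F K p n).ncard =
      p * (p - 1) * n * (IrredSet (X ^ p + X ^ (p - 1) : F[X]) 1 n).ncard := by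
  have hp : p.Prime := Fact.out
  have hpre : artinSchreierGenerators F K p n =
      artinSchreierMinpoly F p ⁻¹' IrredSet (X ^ p + X ^ (p - 1)) 1 n :=
    Set.ext fun _ => artinSchreierMinpoly_mem_irredSet_iff.symm
  have hfin := finite_artinSchreierGenerators (F := F) (K := K) (p := p) hn
  rw [hpre] at hfin ⊢
  exact ncard_preimage_eq_mul_ncard hfin
    (mul_ne_zero (mul_ne_zero hp.ne_zero (Nat.sub_pos_of_lt hp.one_lt).ne') hn)
    fun _ => ncard_artinSchreierMinpoly_preimage_singleton

end Finite

variable [Fintype F] [IsAlgClosed K]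

theorem sum_ncard_artinSchreierGenerators {n : ℕ} (hn : n ≠ 0) :
    ∑ k ∈ n.divisors with ¬ p ∣ n / k, (artinSchreierGenerators F K p k).ncard =
      (p - 1) * Fintype.card F ^ n := by
  rw [← ncard_setOf_frobenius_sub_pow_eq_one (K := K) hn,
    ncard_eq_sum_ncard_fiberwise (finite_setOf_frobenius_sub_pow_eq_one hn)
      (f := fun z => degreeOver F (z ^ p - z)) (t := {k ∈ n.divisors | ¬ p ∣ n / k})
      fun z hz => ?_]
  · refine Finset.sum_congr rfl fun k hk => ?_
    rw [Finset.mem_filter, Nat.mem_divisors] at hk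
    congr 1
    ext z
    simp only [artinSchreierGenerators, Set.mem_ofPred_eq, frobenius_sub_pow_eq_one_iff]
    refine ⟨?_, fun h => ⟨h.1.1, h.2⟩⟩
    rintro ⟨hz, rfl⟩
    exact ⟨⟨hz, hk.1.1, hk.2⟩, rfl⟩
  · rw [Finset.mem_coe, Finset.mem_filter, Nat.mem_divisors]
    obtain ⟨-, hdvd, hp⟩ := frobenius_sub_pow_eq_one_iff.1 hz
    exact ⟨⟨hdvd, hn⟩, hp⟩

theorem ncard_artinSchreierGenerators (a : ℕ) {m : ℕ} (hm : ¬ p ∣ m) :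
    ((artinSchreierGenerators F K p (p ^ a * m)).ncard : ℚ) =
      (p - 1) * (m * Ifun m ((Fintype.card F : ℚ) ^ p ^ a)) := by
  have hp : p.Prime := Fact.out
  have hpa : p ^ a ≠ 0 := pow_ne_zero a hp.ne_zero
  refine eq_mul_Ifun_of_sum_divisors_eq (s := {v | ¬ p ∣ v})
    (f := fun v => ((artinSchreierGenerators F K p (p ^ a * v)).ncard : ℚ))
    (fun v w hvw hw hv => hw (hv.trans hvw)) (fun v hv hpv => ?_)
    (Nat.pos_of_ne_zero fun h => hm (h ▸ dvd_zero p)) hm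
  have hsum := sum_ncard_artinSchreierGenerators (F := F) (K := K) (p := p)
    (mul_ne_zero hpa hv.ne')
  rw [← image_mul_divisors_eq_filter hp hpv,
    Finset.sum_image (mul_right_injective₀ hpa).injOn] at hsum
  rw [← Nat.cast_sum, hsum, ← pow_mul, Nat.cast_mul, Nat.cast_pred hp.pos, Nat.cast_pow]

end ArtinSchreier

theorem stmt12_general {F : Type*} [Field F] [Fintype F] (p : ℕ) [Fact p.Prime] [CharP F p]
    {n : ℕ} (hn : n ≠ 0) :
    ((IrredSet (X ^ p + X ^ (p - 1) : F[X]) 1 n).ncard : ℚ) =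
      1 / (p * ordProj[p] n) * Ifun (ordCompl[p] n) ((Fintype.card F : ℚ) ^ ordProj[p] n) := by
  have hp : p.Prime := Fact.out
  have hp1 : (p - 1 : ℚ) ≠ 0 := sub_ne_zero.2 (Nat.cast_ne_one.2 hp.ne_one)
  have hp0 : (p : ℚ) ≠ 0 := Nat.cast_ne_zero.2 hp.ne_zero
  have hm0 : ((ordCompl[p] n : ℕ) : ℚ) ≠ 0 := Nat.cast_ne_zero.2 (Nat.ordCompl_pos p hn).ne'
  have hfactor : (n : ℚ) = (p : ℚ) ^ n.factorization p * (ordCompl[p] n : ℕ) := by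
    exact_mod_cast (Nat.ordProj_mul_ordCompl_eq_self n p).symm
  have hcount := ncard_artinSchreierGenerators (F := F) (K := AlgebraicClosure F)
    (n.factorization p) (Nat.not_dvd_ordCompl hp hn)
  rw [Nat.ordProj_mul_ordCompl_eq_self, ncard_artinSchreierGenerators_eq_mul_ncard_irredSet hn]
    at hcount
  push_cast [Nat.cast_pred hp.pos] at hcount ⊢
  rw [one_div_mul_eq_div, eq_div_iff (mul_ne_zero hp0 (pow_ne_zero _ hp0))]
  refine mul_left_cancel₀ (mul_ne_zero hp1 hm0) ?_
  rw [hfactor] at hcount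
  linear_combination hcount

/-- Theorem 12: over `F_q` of characteristic three,
`|𝓘(x³+x², 1, n, q)| = (1/(3n₃)) I(n/n₃, q^{n₃})`. -/
theorem stmt12 {F : Type*} [Field F] [Fintype F] (q : ℕ) (hq : Fintype.card F = q)
    (hchar : ringChar F = 3) (n : ℕ) (hn : 1 < n) :
    ((IrredSet (X ^ 3 + X ^ 2 : F[X]) 1 n).ncard : ℚ) =
      (1 / (3 * (nThree n : ℚ))) * Ifun (n / nThree n) ((q : ℚ) ^ nThree n) := by
  subst hq
  have : CharP F 3 := hchar ▸ ringChar.charP F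
  exact_mod_cast stmt12_general (F := F) 3 (by omega : n ≠ 0)
end

section
/- Let F_q be a finite field of characteristic three and let n > 1 be an integer. Then |𝓘(x^3 − x, 1, n, q)| = (2/(3 n_3)) I(n/n_3, q^{n_3}). -/
open Polynomial

/-!
Let `F` be a finite field of characteristic `p` and `f` a monic irreducible polynomial over `F`
with root `a`. By the additive form of Hilbert's Theorem 90, `a` has the form `b ^ p - b` in a
finite field containing it if and only if its absolute trace there vanishes. In `F(a)` this trace
is minus that of the second coefficient of `f`, and in an extension of `F(a)` of degree `r` it
gets multiplied by `r`. So if the trace of the second coefficient vanishes, then `f(X ^ p - X)`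
has a root in `F(a)`, and otherwise each of its roots has degree divisible by `p` over `F(a)`,
which makes `f(X ^ p - X)` irreducible.

Now let `p ∤ m`. An element of the extension of `F` of degree `p ^ k * m` has nonzero absolute trace
if and only if its degree has the form `p ^ k * e` with `e ∣ m` and its minimal polynomial stays
irreducible under `X ↦ X ^ p - X`. Since a proportion `(p - 1) / p` of the elements has nonzero
trace, counting them by degree gives `∑ p ^ k * e * |𝓘(X ^ p - X, 1, p ^ k * e, q)|` over `e ∣ m`,
and Möbius inversion in `m` isolates the term `e = m`.
-/

section Trace

variable (k F : Type*) {E : Type*} [Field k] [Field F] [Field E]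

open scoped IntermediateField in
theorem trace_eq_nsmul_trace_neg_nextCoeff_minpoly [Algebra k F] [Algebra F E] [Algebra k E]
    [IsScalarTower k F E] [FiniteDimensional k F] [FiniteDimensional F E] (x : E) :
    Algebra.trace k E x = (Module.finrank F E / (minpoly F x).natDegree) •
      Algebra.trace k F (-(minpoly F x).nextCoeff) := by
  have hx : IsIntegral F x := .of_finite F x
  have hdeg : Module.finrank F E / (minpoly F x).natDegree = Module.finrank F⟮x⟯ E := by
    rw [← IntermediateField.adjoin.finrank hx, ← Module.finrank_mul_finrank F F⟮x⟯ E,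
      Nat.mul_div_cancel_left _ Module.finrank_pos]
  rw [← Algebra.trace_trace (S := F), trace_eq_finrank_mul_minpoly_nextCoeff F, hdeg,
    ← nsmul_eq_mul, map_nsmul]

variable {F}

theorem pow_card_eq_self_iff_mem_bot [Fintype k] [Finite F] [Algebra k F] {x : F} :
    x ^ Fintype.card k = x ↔ x ∈ (⊥ : Subalgebra k F) := by
  refine ⟨fun hx ↦ ?_, ?_⟩
  · refine (IsGalois.mem_bot_iff_fixed x).2 fun σ ↦ ?_
    obtain ⟨i, rfl⟩ := (FiniteField.bijective_frobeniusAlgEquivOfAlgebraic_pow k F).2 σ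
    rw [AlgEquiv.coe_pow]
    exact Function.iterate_fixed hx i
  · rintro ⟨c, rfl⟩
    rw [← map_pow, FiniteField.pow_card]

theorem trace_pow_card_sub_self [Fintype k] [Algebra k F] [Algebra.IsAlgebraic k F] (b : F) :
    Algebra.trace k F (b ^ Fintype.card k - b) = 0 := by
  rw [map_sub, sub_eq_zero]
  exact Algebra.trace_eq_of_algEquiv (FiniteField.frobeniusAlgEquivOfAlgebraic k F) b

theorem exists_pow_card_sub_self_eq_iff_trace_eq_zero [Fintype k] [Finite F] [Algebra k F] {a : F} :
    (∃ b : F, b ^ Fintype.card k - b = a) ↔ Algebra.trace k F a = 0 := by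
  let T := Algebra.trace k F
  let φ : F →ₗ[k] F := (FiniteField.frobeniusAlgHom k F).toLinearMap - LinearMap.id
  have hker : Module.finrank k (LinearMap.ker φ) = 1 := by
    have : LinearMap.ker φ = Subalgebra.toSubmodule ⊥ := by
      ext x
      rw [Subalgebra.mem_toSubmodule, ← pow_card_eq_self_iff_mem_bot, ← sub_eq_zero]
      rfl
    rw [this, Subalgebra.finrank_toSubmodule, Subalgebra.finrank_bot]
  have hle : LinearMap.range φ ≤ LinearMap.ker T := by
    rintro _ ⟨b, rfl⟩
    exact trace_pow_card_sub_self k b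
  have hrange : LinearMap.range φ = LinearMap.ker T := by
    refine Submodule.eq_of_le_of_finrank_eq hle ?_
    have hφ := φ.finrank_range_add_finrank_ker
    have hT := T.finrank_range_add_finrank_ker
    rw [LinearMap.range_eq_top.2 (Algebra.trace_surjective k F), finrank_top,
      Module.finrank_self] at hT
    omega
  exact SetLike.ext_iff.1 hrange a

variable (F)

theorem card_mul_ncard_trace_ne_zero [Finite F] [Algebra k F] :
    Nat.card k * {a : F | Algebra.trace k F a ≠ 0}.ncard = (Nat.card k - 1) * Nat.card F := by
  have : Finite k := .of_injective _ (algebraMap k F).injective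
  let T := (Algebra.trace k F).toAddMonoidHom
  have hcard : Nat.card k * Nat.card T.ker = Nat.card F := by
    rw [← T.ker.index_mul_card, AddSubgroup.index_ker,
      AddMonoidHom.range_eq_top.2 (Algebra.trace_surjective k F), AddSubgroup.card_top]
  have hcompl : {a : F | Algebra.trace k F a ≠ 0} = (T.ker : Set F)ᶜ := rfl
  rw [hcompl, Set.ncard_compl, Nat.mul_sub, tsub_mul, one_mul]
  congr 1

end Trace

section ArtinSchreier

theorem natDegree_comp_X_pow_sub_X {F : Type*} [Field F] {p : ℕ} (hp : 1 < p) (f : F[X]) :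
    (f.comp (X ^ p - X)).natDegree = f.natDegree * p := by
  rw [natDegree_comp, FiniteField.X_pow_card_sub_X_natDegree_eq F hp]

variable {p : ℕ} [Fact p.Prime] {F E : Type*} [Field F] [Field E] [Algebra (ZMod p) F]
  [Algebra F E] [Algebra (ZMod p) E] [IsScalarTower (ZMod p) F E]

theorem trace_ne_zero_iff_not_dvd_and_trace_nextCoeff_ne_zero [Finite F]
    [FiniteDimensional F E] {x : E} :
    Algebra.trace (ZMod p) E x ≠ 0 ↔ ¬ p ∣ Module.finrank F E / (minpoly F x).natDegree ∧
      Algebra.trace (ZMod p) F (minpoly F x).nextCoeff ≠ 0 := by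
  rw [trace_eq_nsmul_trace_neg_nextCoeff_minpoly (ZMod p) F, map_neg, nsmul_eq_mul, mul_ne_zero_iff,
    neg_ne_zero, Ne, ZMod.natCast_eq_zero_iff]

theorem natDegree_mul_dvd_finrank_of_aeval_comp_eq_zero [Finite F]
    [FiniteDimensional F E] {f : F[X]} (hm : f.Monic) (hf : Irreducible f)
    (htr : Algebra.trace (ZMod p) F f.nextCoeff ≠ 0) {b : E}
    (hb : aeval b (f.comp (X ^ p - X)) = 0) : f.natDegree * p ∣ Module.finrank F E := by
  have hroot : aeval (b ^ p - b) f = 0 := by simpa [aeval_comp] using hb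
  have hmin : f = minpoly F (b ^ p - b) := minpoly.eq_of_irreducible_of_monic hf hroot hm
  have : FiniteDimensional (ZMod p) E := .trans (ZMod p) F E
  have hzero : Algebra.trace (ZMod p) E (b ^ p - b) = 0 := by
    simpa using trace_pow_card_sub_self (ZMod p) b
  have hdvd : p ∣ Module.finrank F E / f.natDegree := by
    by_contra h
    rw [hmin] at h htr
    exact trace_ne_zero_iff_not_dvd_and_trace_nextCoeff_ne_zero.2 ⟨h, htr⟩ hzero
  refine Nat.mul_dvd_of_dvd_div ?_ hdvd
  rw [hmin]
  exact minpoly.degree_dvd (.of_finite F _)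

theorem irreducible_comp_X_pow_sub_X_of_trace_nextCoeff_ne_zero [Finite F] {f : F[X]}
    (hm : f.Monic) (hf : Irreducible f) (htr : Algebra.trace (ZMod p) F f.nextCoeff ≠ 0) :
    Irreducible (f.comp (X ^ p - X)) := by
  have hp : p.Prime := Fact.out
  have hdeg := natDegree_comp_X_pow_sub_X hp.one_lt f
  have hpos : 0 < (f.comp (X ^ p - X)).natDegree := hdeg ▸ Nat.mul_pos hf.natDegree_pos hp.pos
  obtain ⟨g, hg, hgf⟩ := exists_irreducible_of_natDegree_pos hpos
  have := Fact.mk hg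
  have := (AdjoinRoot.powerBasis hg.ne_zero).finite
  have hroot : aeval (AdjoinRoot.root g) (f.comp (X ^ p - X)) = 0 := by
    rwa [AdjoinRoot.aeval_eq, AdjoinRoot.mk_eq_zero]
  have hdvd := natDegree_mul_dvd_finrank_of_aeval_comp_eq_zero hm hf htr hroot
  rw [(AdjoinRoot.powerBasis hg.ne_zero).finrank, AdjoinRoot.powerBasis_dim, ← hdeg] at hdvd
  have hassoc : Associated g (f.comp (X ^ p - X)) :=
    associated_of_dvd_of_natDegree_le hgf (ne_zero_of_natDegree_gt hpos)
      (Nat.le_of_dvd hg.natDegree_pos hdvd)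
  exact hassoc.irreducible hg

theorem trace_nextCoeff_ne_zero_of_irreducible_comp_X_pow_sub_X [Finite F] {f : F[X]}
    (hm : f.Monic) (hf : Irreducible f) (hcomp : Irreducible (f.comp (X ^ p - X))) :
    Algebra.trace (ZMod p) F f.nextCoeff ≠ 0 := by
  intro htr
  have := Fact.mk hf
  have := hm.finite_adjoinRoot
  have := Module.finite_of_finite F (M := AdjoinRoot f)
  have hmin : minpoly F (AdjoinRoot.root f) = f := by
    simp [AdjoinRoot.minpoly_root hf.ne_zero, hm.leadingCoeff]
  have hzero : Algebra.trace (ZMod p) (AdjoinRoot f) (AdjoinRoot.root f) = 0 := by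
    by_contra h
    exact (trace_ne_zero_iff_not_dvd_and_trace_nextCoeff_ne_zero (F := F).1 h).2 (hmin.symm ▸ htr)
  obtain ⟨b, hb⟩ := (exists_pow_card_sub_self_eq_iff_trace_eq_zero (ZMod p)).2 hzero
  rw [ZMod.card] at hb
  have hroot : aeval b (f.comp (X ^ p - X)) = 0 := by
    simp [aeval_comp, hb, AdjoinRoot.aeval_eq]
  have hb' : Irreducible (minpoly F b) := minpoly.irreducible (.of_finite F b)
  have hle := calc f.natDegree * p
    _ = (f.comp (X ^ p - X)).natDegree :=
      (natDegree_comp_X_pow_sub_X (Fact.out : p.Prime).one_lt f).symm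
    _ ≤ (minpoly F b).natDegree :=
      natDegree_le_of_dvd (hb'.dvd_symm hcomp (minpoly.dvd F b hroot)) hb'.ne_zero
    _ ≤ Module.finrank F (AdjoinRoot f) := minpoly.natDegree_le b
    _ = f.natDegree := (AdjoinRoot.powerBasis hf.ne_zero).finrank
  exact hle.not_gt (lt_mul_of_one_lt_right hf.natDegree_pos (Fact.out : p.Prime).one_lt)

theorem irreducible_comp_X_pow_sub_X_iff [Finite F] {f : F[X]} (hm : f.Monic)
    (hf : Irreducible f) :
    Irreducible (f.comp (X ^ p - X)) ↔ Algebra.trace (ZMod p) F f.nextCoeff ≠ 0 :=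
  ⟨trace_nextCoeff_ne_zero_of_irreducible_comp_X_pow_sub_X hm hf,
    irreducible_comp_X_pow_sub_X_of_trace_nextCoeff_ne_zero hm hf⟩

end ArtinSchreier

section Count

theorem splits_map_algebraMap_of_natDegree_dvd_finrank {F K : Type*} [Field F] [Finite F] [Field K]
    [Finite K] [Algebra F K] {f : F[X]} (hf : Irreducible f)
    (hd : f.natDegree ∣ Module.finrank F K) : (f.map (algebraMap F K)).Splits := by
  have := Fintype.ofFinite K
  have hdvd : f ∣ X ^ Fintype.card K - X := by
    rw [Fintype.card_eq_nat_card, Module.natCard_eq_pow_finrank (K := F)]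
    exact hf.natDegree_dvd_iff_dvd_X_pow_card_pow_sub_X.1 hd
  exact (FiniteField.isSplittingField_sub K F).splits.of_dvd
    (map_ne_zero (FiniteField.X_pow_card_sub_X_ne_zero F Fintype.one_lt_card))
    (Polynomial.map_dvd (algebraMap F K) hdvd)

theorem setOf_minpoly_eq_eq_rootSet {F K : Type*} [Field F] [Field K] [Algebra F K] {f : F[X]}
    (hm : f.Monic) (hf : Irreducible f) : {a : K | minpoly F a = f} = f.rootSet K := by
  ext a
  rw [mem_rootSet]
  refine ⟨?_, fun ha ↦ (minpoly.eq_of_irreducible_of_monic hf ha.2 hm).symm⟩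
  rintro rfl
  exact ⟨hf.ne_zero, minpoly.aeval F a⟩

theorem ncard_setOf_minpoly_mem {F K : Type*} [Field F] [Finite F] [Field K] [Finite K]
    [Algebra F K] {d : ℕ} (hd : d ∣ Module.finrank F K) {S : Set F[X]}
    (hS : ∀ f ∈ S, f.Monic ∧ Irreducible f ∧ f.natDegree = d) :
    {a : K | minpoly F a ∈ S}.ncard = d * S.ncard := by
  have hfiber {f : F[X]} (hf : f ∈ S) : {a : K | minpoly F a = f}.ncard = d := by
    obtain ⟨hm, hirr, rfl⟩ := hS f hf
    rw [setOf_minpoly_eq_eq_rootSet hm hirr, ← Nat.card_coe_set_eq, Nat.card_eq_fintype_card]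
    exact card_rootSet_eq_natDegree (PerfectField.separable_of_irreducible hirr)
      (splits_map_algebraMap_of_natDegree_dvd_finrank hirr hd)
  have hfin : S.Finite := by
    refine (Set.finite_range (minpoly F : K → F[X])).subset fun f hf ↦ ?_
    obtain ⟨-, hirr, hdeg⟩ := hS f hf
    exact Set.nonempty_of_ncard_ne_zero (hfiber hf ▸ hdeg ▸ hirr.natDegree_pos.ne')
  have hunion : {a : K | minpoly F a ∈ S} = ⋃ f ∈ S, {a : K | minpoly F a = f} := by
    ext; simp
  have hdisj : S.PairwiseDisjoint fun f ↦ {a : K | minpoly F a = f} := fun f _ g _ hfg ↦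
    Set.disjoint_left.2 fun a haf hag ↦ hfg (haf.symm.trans hag)
  rw [hunion, hfin.ncard_biUnion (fun _ _ ↦ Set.toFinite _) hdisj,
    finsum_mem_congr rfl fun f hf ↦ hfiber hf, finsum_mem_eq_finite_toFinset_sum _ hfin,
    Finset.sum_const, Set.ncard_eq_toFinset_card S hfin, smul_eq_mul, mul_comm]

theorem mem_irredSet_one_iff {F : Type*} [Field F] {f g : F[X]} {n : ℕ} :
    f ∈ IrredSet g 1 n ↔ f.Monic ∧ Irreducible f ∧ f.natDegree = n ∧ Irreducible (f.comp g) := by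
  have : ratTransform g 1 f = f.comp g := by simp [ratTransform, comp, eval₂_eq_sum_range]
  rw [IrredSet, Set.mem_ofPred_eq, this]

theorem not_dvd_pow_mul_div_iff_pow_dvd {p k m d : ℕ} (hp : p.Prime) (hm : ¬ p ∣ m)
    (hd : d ∣ p ^ k * m) : ¬ p ∣ p ^ k * m / d ↔ p ^ k ∣ d := by
  have hpos : 0 < p ^ k := Nat.pow_pos hp.pos
  have hN : p ^ k * m ≠ 0 := mul_ne_zero hpos.ne' (by rintro rfl; exact hm (dvd_zero p))
  obtain ⟨c, hc⟩ := hd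
  rw [hc, Nat.mul_div_cancel_left _ (Nat.pos_of_mul_pos_right (Nat.pos_of_ne_zero (hc ▸ hN)))]
  refine ⟨fun hpc ↦ ?_, ?_⟩
  · have hcop : (p ^ k).Coprime c := ((hp.coprime_iff_not_dvd).2 hpc).pow_left k
    exact hcop.dvd_of_dvd_mul_right (hc ▸ dvd_mul_right _ m)
  · rintro ⟨e, rfl⟩ hpc
    rw [mul_assoc] at hc
    exact hm (Nat.eq_of_mul_eq_mul_left hpos hc ▸ hpc.mul_left e)

variable (p : ℕ) [Fact p.Prime] (F : Type*) [Field F] [Finite F] {k m : ℕ}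

theorem ncard_trace_ne_zero_eq_sum_divisors [Algebra (ZMod p) F] {K : Type*} [Field K] [Finite K]
    [Algebra F K] [Algebra (ZMod p) K] [IsScalarTower (ZMod p) F K] (hm : ¬ p ∣ m)
    (hK : Module.finrank F K = p ^ k * m) :
    {a : K | Algebra.trace (ZMod p) K a ≠ 0}.ncard =
      ∑ e ∈ m.divisors, p ^ k * e * (IrredSet (X ^ p - X : F[X]) 1 (p ^ k * e)).ncard := by
  have hp : p.Prime := Fact.out
  have hm0 : m ≠ 0 := by rintro rfl; exact hm (dvd_zero p)
  let A (e : ℕ) : Set K := {a | minpoly F a ∈ IrredSet (X ^ p - X) 1 (p ^ k * e)}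
  have hcard : ∀ e ∈ m.divisors,
      (A e).ncard = p ^ k * e * (IrredSet (X ^ p - X : F[X]) 1 (p ^ k * e)).ncard := fun e he ↦ by
    refine ncard_setOf_minpoly_mem ?_ fun f hf ↦ ⟨hf.1, hf.2.1, hf.2.2.1⟩
    exact hK ▸ Nat.mul_dvd_mul_left _ (Nat.dvd_of_mem_divisors he)
  have htrace (a : K) : Algebra.trace (ZMod p) K a ≠ 0 ↔
      p ^ k ∣ (minpoly F a).natDegree ∧ Irreducible ((minpoly F a).comp (X ^ p - X)) := by
    have ha : IsIntegral F a := .of_finite F a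
    rw [irreducible_comp_X_pow_sub_X_iff (minpoly.monic ha) (minpoly.irreducible ha),
      trace_ne_zero_iff_not_dvd_and_trace_nextCoeff_ne_zero (F := F), hK,
      not_dvd_pow_mul_div_iff_pow_dvd hp hm (hK ▸ minpoly.degree_dvd ha)]
  have hunion : {a : K | Algebra.trace (ZMod p) K a ≠ 0} = ⋃ e ∈ m.divisors, A e := by
    ext a
    have ha : IsIntegral F a := .of_finite F a
    simp only [Set.mem_ofPred_eq, Set.mem_iUnion, exists_prop, A, mem_irredSet_one_iff, htrace]
    refine ⟨?_, ?_⟩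
    · rintro ⟨⟨e, he⟩, hirr⟩
      refine ⟨e, Nat.mem_divisors.2 ⟨?_, hm0⟩, minpoly.monic ha, minpoly.irreducible ha, he, hirr⟩
      exact Nat.dvd_of_mul_dvd_mul_left (Nat.pow_pos hp.pos) (he ▸ hK ▸ minpoly.degree_dvd ha)
    · rintro ⟨e, -, -, -, he, hirr⟩
      exact ⟨⟨e, he⟩, hirr⟩
  have hdisj : (m.divisors : Set ℕ).PairwiseDisjoint A := fun e _ e' _ hee' ↦
    Set.disjoint_left.2 fun a ha ha' ↦
      hee' (Nat.eq_of_mul_eq_mul_left (Nat.pow_pos hp.pos) (ha.2.2.1.symm.trans ha'.2.2.1))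
  rw [hunion, ← Finset.sum_congr rfl hcard]
  exact (m.divisors.finite_toSet.ncard_biUnion (fun e _ ↦ Set.toFinite (A e)) hdisj).trans
    (finsum_mem_coe_finset _ _)

theorem mul_sum_divisors_ncard_irredSet [CharP F p] (hm : ¬ p ∣ m) :
    p * ∑ e ∈ m.divisors, p ^ k * e * (IrredSet (X ^ p - X : F[X]) 1 (p ^ k * e)).ncard =
      (p - 1) * Nat.card F ^ (p ^ k * m) := by
  let _ : Algebra (ZMod p) F := ZMod.algebra F p
  have : NeZero (p ^ k * m) :=
    ⟨mul_ne_zero (NeZero.ne _) (by rintro rfl; exact hm (dvd_zero p))⟩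
  rw [← FiniteField.natCard_extension F p, ← ncard_trace_ne_zero_eq_sum_divisors p F hm
    (FiniteField.finrank_extension F p _)]
  simpa using card_mul_ncard_trace_ne_zero (ZMod p) (FiniteField.Extension F p (p ^ k * m))

end Count

theorem eq_mul_Ifun_of_forall_sum_divisors_eq {a : ℕ → ℚ} {c Q : ℚ} {m : ℕ} (hm : m ≠ 0)
    (h : ∀ l, l ∣ m → ∑ d ∈ l.divisors, d * a d = c * Q ^ l) : a m = c * Ifun m Q := by
  have hinv : ∑ x ∈ m.divisorsAntidiagonal,
      ((ArithmeticFunction.moebius x.1 : ℤ) : ℚ) * (c * Q ^ x.2) = m * a m :=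
    (ArithmeticFunction.sum_eq_iff_sum_mul_moebius_eq_on {l | l ∣ m} fun _ _ ↦ dvd_trans).1
      (fun l _ hl ↦ h l hl) m (Nat.pos_of_ne_zero hm) dvd_rfl
  rw [Nat.sum_divisorsAntidiagonal fun i j ↦
    ((ArithmeticFunction.moebius i : ℤ) : ℚ) * (c * Q ^ j)] at hinv
  rw [Ifun, mul_left_comm, Finset.mul_sum]
  simp_rw [mul_left_comm c]
  rw [hinv, one_div, inv_mul_cancel_left₀ (Nat.cast_ne_zero.2 hm)]

theorem stmt13_general (F : Type*) [Field F] [Finite F] (p : ℕ) [Fact p.Prime] [CharP F p] {n : ℕ}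
    (hn : n ≠ 0) :
    ((IrredSet (X ^ p - X : F[X]) 1 n).ncard : ℚ) =
      (p - 1) / (p * p ^ n.factorization p) *
        Ifun (n / p ^ n.factorization p) (Nat.card F ^ p ^ n.factorization p) := by
  have hp : p.Prime := Fact.out
  set k := n.factorization p
  set m := n / p ^ k
  have hnm : p ^ k * m = n := Nat.ordProj_mul_ordCompl_eq_self n p
  have hpm : ¬ p ∣ m := Nat.not_dvd_ordCompl hp hn
  have hp0 : (p : ℚ) ≠ 0 := Nat.cast_ne_zero.2 hp.ne_zero
  have hsum (l : ℕ) (hl : l ∣ m) :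
      ∑ e ∈ l.divisors, (e : ℚ) * (IrredSet (X ^ p - X : F[X]) 1 (p ^ k * e)).ncard =
        (p - 1) / (p * p ^ k) * ((Nat.card F : ℚ) ^ p ^ k) ^ l := by
    have h := mul_sum_divisors_ncard_irredSet p F (k := k) fun hpl ↦ hpm (hpl.trans hl)
    apply_fun ((↑) : ℕ → ℚ) at h
    simp only [mul_assoc, ← Finset.mul_sum] at h
    push_cast [hp.one_le] at h
    rw [← pow_mul]
    field_simp
    linear_combination h
  rw [← hnm]
  exact eq_mul_Ifun_of_forall_sum_divisors_eq (Nat.ordCompl_pos p hn).ne' hsum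

/-- Theorem 13: over `F_q` of characteristic three,
`|𝓘(x³−x, 1, n, q)| = (2/(3n₃)) I(n/n₃, q^{n₃})`. -/
theorem stmt13 {F : Type*} [Field F] [Fintype F] (q : ℕ) (hq : Fintype.card F = q)
    (hchar : ringChar F = 3) (n : ℕ) (hn : 1 < n) :
    ((IrredSet (X ^ 3 - X : F[X]) 1 n).ncard : ℚ) =
      (2 / (3 * (nThree n : ℚ))) * Ifun (n / nThree n) ((q : ℚ) ^ nThree n) := by
  have : CharP F 3 := ringChar.of_eq hchar
  rw [stmt13_general F 3 (Nat.ne_zero_of_lt hn), nThree, Nat.card_eq_fintype_card, hq]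
  norm_num
end
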